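/- arXiv:2103.00253 — 2 statements merged into one kernel-verified Lean document; each statement's English description precedes it below -/
import Mathlib

section
/- Let R be a two-dimensional commutative Noetherian local ring and let M be a nonzero torsion-free finitely generated R-module (for example, a nonzero ideal of R). If M has finite injective dimension and finite reducing Gorenstein dimension, then R is Gorenstein. -/
open CategoryTheory Pointwise

universe u

variable (R : Type u) [CommRing R]

/-- `Ext^n_R(X, Y) = 0`. -/
def ExtVanish (X Y : Type u) [AddCommGroup X] [Module R X]
    [AddCommGroup Y] [Module R Y] (n : ℕ) : Prop :=
  Subsingleton (((Ext R (ModuleCat.{u} R) n).obj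
    (Opposite.op (ModuleCat.of R X))).obj (ModuleCat.of R Y))

/-- A finitely generated module `X` is totally reflexive if the evaluation map to the
double dual is bijective and `Ext^i(X, R) = 0 = Ext^i(X^*, R)` for all `i ≥ 1`. -/
def IsTotallyReflexive (X : Type u) [AddCommGroup X] [Module R X] : Prop :=
  Module.Finite R X ∧
  Function.Bijective (Module.Dual.eval R X) ∧
  (∀ i : ℕ, 1 ≤ i → ExtVanish R X R i) ∧
  (∀ i : ℕ, 1 ≤ i → ExtVanish R (Module.Dual R X) R i)

/-- `0 → A → B → C → 0` is a short exact sequence. -/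
def IsShortExact {A B C : Type u} [AddCommGroup A] [Module R A] [AddCommGroup B] [Module R B]
    [AddCommGroup C] [Module R C] (f : A →ₗ[R] B) (g : B →ₗ[R] C) : Prop :=
  Function.Injective f ∧ Function.Surjective g ∧ Function.Exact f g

/-- Gorenstein dimension at most `n`: there is a resolution of length `≤ n`
by totally reflexive modules. -/
def GdimLE : ℕ → ModuleCat.{u} R → Prop
  | 0, M => IsTotallyReflexive R M
  | n + 1, M => ∃ (X K : ModuleCat.{u} R) (f : K →ₗ[R] X) (g : X →ₗ[R] M),
      IsTotallyReflexive R X ∧ IsShortExact R f g ∧ GdimLE n K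

/-- Projective dimension at most `n`. -/
def PdimLE : ℕ → ModuleCat.{u} R → Prop
  | 0, M => Module.Finite R M ∧ Module.Projective R M
  | n + 1, M => ∃ (X K : ModuleCat.{u} R) (f : K →ₗ[R] X) (g : X →ₗ[R] M),
      Module.Finite R X ∧ Module.Projective R X ∧ IsShortExact R f g ∧ PdimLE n K

/-- Injective dimension at most `n`. -/
def InjdimLE : ℕ → ModuleCat.{u} R → Prop
  | 0, M => Module.Injective R M
  | n + 1, M => ∃ (I C : ModuleCat.{u} R) (f : M →ₗ[R] I) (g : I →ₗ[R] C),
      Module.Injective R I ∧ IsShortExact R f g ∧ InjdimLE n C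

/-- The Gorenstein dimension, as an element of `ℕ∞`. -/
noncomputable def Gdim (M : ModuleCat.{u} R) : ℕ∞ :=
  sInf {n : ℕ∞ | ∃ m : ℕ, n = (m : ℕ∞) ∧ GdimLE R m M}

/-- The projective dimension, as an element of `ℕ∞`. -/
noncomputable def Pdim (M : ModuleCat.{u} R) : ℕ∞ :=
  sInf {n : ℕ∞ | ∃ m : ℕ, n = (m : ℕ∞) ∧ PdimLE R m M}

/-- A local ring is Gorenstein if it has finite injective dimension over itself. -/
def IsGorensteinRing : Prop :=
  ∃ n : ℕ, InjdimLE R n (ModuleCat.of R R)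

/-- `IsSyzygy R n S K` : `S` is an `n`-th syzygy of `K`, i.e. there is an exact sequence
`0 → S → F_{n-1} → ⋯ → F_0 → K → 0` with each `F_j` finitely generated free. -/
def IsSyzygy : ℕ → ModuleCat.{u} R → ModuleCat.{u} R → Prop
  | 0, S, K => Nonempty (S ≃ₗ[R] K)
  | n + 1, S, K => ∃ (W F : ModuleCat.{u} R) (f : W →ₗ[R] F) (g : F →ₗ[R] K),
      Module.Free R F ∧ Module.Finite R F ∧ IsShortExact R f g ∧ IsSyzygy n S W

/-- One step in a reducing sequence: a short exact sequence
`0 → K^{⊕a} → L → (Ω^n K)^{⊕b} → 0`. -/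
def ReducingStep (K L : ModuleCat.{u} R) (a b n : ℕ) : Prop :=
  ∃ (W : ModuleCat.{u} R) (f : (Fin a → K) →ₗ[R] L) (g : L →ₗ[R] (Fin b → W)),
    IsSyzygy R n W K ∧ IsShortExact R f g

/-- `M` admits a reducing sequence `K_0 = M, K_1, …, K_r` relative to the property `P`,
that is, short exact sequences `0 → K_{i-1}^{⊕a_i} → K_i → (Ω^{n_i}K_{i-1})^{⊕b_i} → 0`
with `a_i, b_i, n_i ≥ 1` and `P (K_r)`. -/
def HasReducingSeq (P : ModuleCat.{u} R → Prop) (M : ModuleCat.{u} R) (r : ℕ) : Prop :=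
  ∃ (K : Fin (r + 1) → ModuleCat.{u} R) (a b n : Fin r → ℕ),
    K 0 = M ∧ (∀ i, Module.Finite R (K i)) ∧
    (∀ i : Fin r, 1 ≤ a i ∧ 1 ≤ b i ∧ 1 ≤ n i ∧
      ReducingStep R (K i.castSucc) (K i.succ) (a i) (b i) (n i)) ∧
    P (K (Fin.last r))

/-- The reducing invariant attached to the finiteness property `P`. -/
noncomputable def ReducingDim (P : ModuleCat.{u} R → Prop) (M : ModuleCat.{u} R) : ℕ∞ :=
  sInf {n : ℕ∞ | ∃ r : ℕ, n = (r : ℕ∞) ∧ HasReducingSeq R P M r}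

/-- The reducing Gorenstein dimension. -/
noncomputable def rGdim (M : ModuleCat.{u} R) : ℕ∞ :=
  ReducingDim R (fun N => ∃ m : ℕ, GdimLE R m N) M

/-- The reducing projective dimension. -/
noncomputable def rPdim (M : ModuleCat.{u} R) : ℕ∞ :=
  ReducingDim R (fun N => ∃ m : ℕ, PdimLE R m N) M

/-- depth of a module over a local ring: `inf { i | Ext^i(k, M) ≠ 0 }`. -/
noncomputable def depth [IsLocalRing R] (M : ModuleCat.{u} R) : ℕ∞ :=
  sInf {n : ℕ∞ | ∃ i : ℕ, n = (i : ℕ∞) ∧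
    ¬ ExtVanish R (R ⧸ IsLocalRing.maximalIdeal R) M i}

/-- maximal Cohen-Macaulay: depth equals the Krull dimension of the ring. -/
def IsMCM [IsLocalRing R] (M : ModuleCat.{u} R) : Prop :=
  (depth R M : WithBot ℕ∞) = ringKrullDim R

/-- torsion-free: every non zero-divisor of `R` is a non zero-divisor on `M`. -/
def IsTorsionFreeModule (M : Type u) [AddCommGroup M] [Module R M] : Prop :=
  ∀ r ∈ nonZeroDivisors R, ∀ m : M, r • m = 0 → m = 0

section Aux

/-- Vanishing of the (derived category) Ext group. -/
def EV (A B : Type u) [AddCommGroup A] [Module R A] [AddCommGroup B] [Module R B] (n : ℕ) : Prop :=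
  ∀ e : Abelian.Ext (ModuleCat.of R A) (ModuleCat.of R B) n, e = 0

theorem extVanish_ev (X Y : Type u) [AddCommGroup X] [Module R X]
    [AddCommGroup Y] [Module R Y] (n : ℕ) (h : ExtVanish R X Y (n + 1)) : EV R X Y (n + 1) := by
  intro e
  let P := projectiveResolution (ModuleCat.of R X)
  obtain ⟨f, hf, rfl⟩ := P.extMk_surjective e (n + 2) rfl
  rw [P.extMk_eq_zero_iff f (n + 2) rfl hf n rfl]
  have hz : Limits.IsZero ((P.complex.linearYonedaObj R (ModuleCat.of R Y)).homology (n + 1)) := by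
    refine Limits.IsZero.of_iso ?_ (P.isoExt (R := R) (n + 1) (ModuleCat.of R Y)).symm
    rw [ModuleCat.isZero_iff_subsingleton]
    exact h
  rw [← HomologicalComplex.exactAt_iff_isZero_homology,
    HomologicalComplex.exactAt_iff' _ n (n + 1) (n + 2) (by simp) (by simp),
    ShortComplex.moduleCat_exact_iff] at hz
  obtain ⟨g, hg⟩ := hz f hf
  exact ⟨g, hg⟩

variable {R}
variable {A B C M N X Y Z : Type u} [AddCommGroup A] [Module R A] [AddCommGroup B] [Module R B]
  [AddCommGroup C] [Module R C] [AddCommGroup M] [Module R M] [AddCommGroup N] [Module R N]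
  [AddCommGroup X] [Module R X] [AddCommGroup Y] [Module R Y] [AddCommGroup Z] [Module R Z]

/-- The associated short complex. -/
abbrev sesOf {f : A →ₗ[R] B} {g : B →ₗ[R] C} (h : IsShortExact R f g) :
    ShortComplex (ModuleCat.{u} R) :=
  ShortComplex.mk (ModuleCat.ofHom f) (ModuleCat.ofHom g)
    (by rw [← ModuleCat.ofHom_comp, h.2.2.linearMap_comp_eq_zero]; rfl)

theorem sesOf_exact {f : A →ₗ[R] B} {g : B →ₗ[R] C} (h : IsShortExact R f g) :
    (sesOf h).ShortExact :=
  ModuleCat.shortComplex_shortExact _ h.2.2 h.1 h.2.1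

theorem ev_X1 {f : A →ₗ[R] B} {g : B →ₗ[R] C} (h : IsShortExact R f g) {n : ℕ}
    (hB : EV R B M n) (hC : EV R C M (n + 1)) : EV R A M n := by
  intro e
  obtain ⟨e2, he⟩ := Abelian.Ext.contravariant_sequence_exact₁ (sesOf_exact h) _ (n₀ := n)
    e (n₁ := n + 1) (by lia) (hC _)
  rw [← he, show e2 = 0 from hB e2]
  simp

theorem ev_X2 {f : A →ₗ[R] B} {g : B →ₗ[R] C} (h : IsShortExact R f g) {n : ℕ}
    (hA : EV R A M n) (hC : EV R C M n) : EV R B M n := by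
  intro e
  obtain ⟨e2, he⟩ := Abelian.Ext.contravariant_sequence_exact₂ (sesOf_exact h) _ (n := n)
    e (hA _)
  rw [← he, show e2 = 0 from hC e2]
  simp

theorem ev_X3 {f : A →ₗ[R] B} {g : B →ₗ[R] C} (h : IsShortExact R f g) {n : ℕ}
    (hA : EV R A M n) (hB : EV R B M (n + 1)) : EV R C M (n + 1) := by
  intro e
  obtain ⟨e2, he⟩ := Abelian.Ext.contravariant_sequence_exact₃ (sesOf_exact h) _ (n₁ := n + 1)
    e (hB _) (n₀ := n) (by lia)
  rw [← he, show e2 = 0 from hA e2]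
  simp

theorem ev_Y2 {f : A →ₗ[R] B} {g : B →ₗ[R] C} (h : IsShortExact R f g) {n : ℕ}
    (hA : EV R M A n) (hC : EV R M C n) : EV R M B n := by
  intro e
  obtain ⟨e2, he⟩ := Abelian.Ext.covariant_sequence_exact₂ _ (sesOf_exact h) (n := n)
    e (hC _)
  rw [← he, show e2 = 0 from hA e2]
  simp

theorem ev_Y3 {f : A →ₗ[R] B} {g : B →ₗ[R] C} (h : IsShortExact R f g) {n : ℕ}
    (hB : EV R M B n) (hA : EV R M A (n + 1)) : EV R M C n := by
  intro e
  obtain ⟨e2, he⟩ := Abelian.Ext.covariant_sequence_exact₃ _ (sesOf_exact h) (n₀ := n)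
    e (n₁ := n + 1) (by lia) (hA _)
  rw [← he, show e2 = 0 from hB e2]
  simp

theorem ev_Y1 {f : A →ₗ[R] B} {g : B →ₗ[R] C} (h : IsShortExact R f g) {n : ℕ}
    (hC : EV R M C n) (hB : EV R M B (n + 1)) : EV R M A (n + 1) := by
  intro e
  obtain ⟨e2, he⟩ := Abelian.Ext.covariant_sequence_exact₁ _ (sesOf_exact h) (n₁ := n + 1)
    e (hB _) (n₀ := n) (by lia)
  rw [← he, show e2 = 0 from hC e2]
  simp

theorem ev_zero_iff : EV R A B 0 ↔ ∀ f : A →ₗ[R] B, f = 0 := by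
  constructor
  · intro h f
    have := h (Abelian.Ext.mk₀ (ModuleCat.ofHom f))
    rw [Abelian.Ext.mk₀_eq_zero_iff] at this
    exact congrArg ModuleCat.Hom.hom this
  · intro h e
    obtain ⟨f, rfl⟩ := (Abelian.Ext.mk₀_bijective _ _).2 e
    rw [Abelian.Ext.mk₀_eq_zero_iff]
    ext1
    exact h _

theorem ev_congr (e : A ≃ₗ[R] B) {n : ℕ} (h : EV R A M n) : EV R B M n := by
  intro x
  have h1 : (Abelian.Ext.mk₀ (ModuleCat.ofHom e.symm.toLinearMap)).comp
      ((Abelian.Ext.mk₀ (ModuleCat.ofHom e.toLinearMap)).comp x (zero_add n)) (zero_add n) = x := by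
    rw [Abelian.Ext.mk₀_comp_mk₀_assoc, ← ModuleCat.ofHom_comp]
    simp
  rw [← h1, h (Abelian.Ext.comp _ _ _), Abelian.Ext.comp_zero]

theorem ev_proj [Module.Projective R A] (n : ℕ) : EV R A M (n + 1) := by
  intro e
  have : Projective (ModuleCat.of R A) := ModuleCat.projective_of_categoryTheory_projective _
  exact Abelian.Ext.eq_zero_of_projective e

theorem ev_free [Module.Free R A] [Module.Finite R A] {n : ℕ} (h : EV R Z R n) : EV R Z A n := by
  intro e
  let b := Module.Free.chooseBasis R A
  have h1 : (ModuleCat.ofHom (LinearMap.id : A →ₗ[R] A)) =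
      ∑ i, (ModuleCat.ofHom (b.coord i)) ≫ ModuleCat.ofHom ((LinearMap.id : R →ₗ[R] R).smulRight (b i)) := by
    ext x
    simp [ModuleCat.hom_sum, b.sum_repr]
  have h2 : e = e.comp (Abelian.Ext.mk₀ (ModuleCat.ofHom (LinearMap.id : A →ₗ[R] A))) (add_zero n) := by
    exact (Abelian.Ext.comp_mk₀_id e).symm
  rw [h2, h1, Abelian.Ext.mk₀_sum, Abelian.Ext.comp_sum]
  refine Finset.sum_eq_zero fun i _ => ?_
  rw [← Abelian.Ext.mk₀_comp_mk₀, ← Abelian.Ext.comp_assoc_of_third_deg_zero, h (Abelian.Ext.comp _ _ _),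
    Abelian.Ext.zero_comp]

theorem ev_extend {f : A →ₗ[R] B} {g : B →ₗ[R] C} (h : IsShortExact R f g)
    (hC : EV R C M 1) (φ : A →ₗ[R] M) : ∃ ψ : B →ₗ[R] M, ψ ∘ₗ f = φ := by
  obtain ⟨e2, he⟩ := Abelian.Ext.contravariant_sequence_exact₁ (sesOf_exact h) (ModuleCat.of R M) (n₀ := 0)
    (Abelian.Ext.mk₀ (ModuleCat.ofHom φ)) (n₁ := 1) (by lia) (hC _)
  obtain ⟨ψ, rfl⟩ := (Abelian.Ext.mk₀_bijective _ _).2 e2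
  rw [Abelian.Ext.mk₀_comp_mk₀] at he
  have := (Abelian.Ext.mk₀_bijective _ _).1 he
  exact ⟨ψ.hom, congrArg ModuleCat.Hom.hom this⟩

/-- Conversely: extension property gives vanishing of `Ext^1`. -/
theorem ev_one_of_extend {f : A →ₗ[R] B} {g : B →ₗ[R] C} (h : IsShortExact R f g)
    (hB : EV R B M 1) (hx : ∀ φ : A →ₗ[R] M, ∃ ψ : B →ₗ[R] M, ψ ∘ₗ f = φ) : EV R C M 1 := by
  intro e
  obtain ⟨e2, he⟩ := Abelian.Ext.contravariant_sequence_exact₃ (sesOf_exact h) _ (n₁ := 1)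
    e (hB _) (n₀ := 0) (by lia)
  obtain ⟨φ, rfl⟩ := (Abelian.Ext.mk₀_bijective _ _).2 e2
  obtain ⟨ψ, hψ⟩ := hx φ.hom
  have h1 : φ = (sesOf h).f ≫ ModuleCat.ofHom ψ := by
    ext1; exact hψ.symm
  rw [← he, h1, ← Abelian.Ext.mk₀_comp_mk₀, ShortComplex.ShortExact.extClass_comp_assoc]

theorem ev_smul_ann {n : ℕ} {r : R} (hr : ∀ a : A, r • a = 0)
    (e : Abelian.Ext (ModuleCat.of R A) (ModuleCat.of R M) n) : r • e = 0 := by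
  have h1 : r • 𝟙 (ModuleCat.of R A) = 0 := by
    ext a; exact hr a
  have : r • e = (Abelian.Ext.mk₀ (r • 𝟙 (ModuleCat.of R A))).comp e (zero_add n) := by
    simp [Abelian.Ext.mk₀_smul]
  rw [this, h1]; simp



theorem ses_smul {x : R} (h : IsSMulRegular A x) :
    IsShortExact R (LinearMap.lsmul R A x) (LinearMap.range (LinearMap.lsmul R A x)).mkQ :=
  ⟨h, Submodule.mkQ_surjective _, LinearMap.exact_map_mkQ_range _⟩

theorem ses_quot (f : A →ₗ[R] B) (h : Function.Injective f) :
    IsShortExact R f (LinearMap.range f).mkQ :=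
  ⟨h, Submodule.mkQ_surjective _, LinearMap.exact_map_mkQ_range _⟩

theorem ses_ker (g : A →ₗ[R] B) (h : Function.Surjective g) :
    IsShortExact R (LinearMap.ker g).subtype g :=
  ⟨Submodule.injective_subtype _, h, LinearMap.exact_subtype_ker_map g⟩

theorem ev_nak [IsLocalRing R] [IsNoetherianRing R] [Module.Finite R A] [Module.Finite R M]
    {x : R} (hx : x ∈ IsLocalRing.maximalIdeal R) (h : IsSMulRegular A x) {n : ℕ}
    (hv : EV R (A ⧸ LinearMap.range (LinearMap.lsmul R A x)) M (n + 1)) : EV R A M n := by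
  have hfin : Module.Finite R (Abelian.Ext (ModuleCat.of R A) (ModuleCat.of R M) n) :=
    inferInstance
  have key : (⊤ : Submodule R (Abelian.Ext (ModuleCat.of R A) (ModuleCat.of R M) n)) ≤
      IsLocalRing.maximalIdeal R • ⊤ := by
    intro e _
    obtain ⟨e2, he⟩ := Abelian.Ext.contravariant_sequence_exact₁ (sesOf_exact (ses_smul h)) _
      (n₀ := n) e (n₁ := n + 1) (by lia) (hv _)
    have h1 : (sesOf (ses_smul h)).f = x • 𝟙 (ModuleCat.of R A) := by
      ext a; rfl
    have h2 : e = x • (e2 : Abelian.Ext (ModuleCat.of R A) (ModuleCat.of R M) n) := by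
      rw [← he, h1]
      simp [Abelian.Ext.mk₀_smul]
    rw [h2]
    exact Submodule.smul_mem_smul hx trivial
  have := Submodule.eq_bot_of_le_smul_of_le_jacobson_bot _ _ (Module.Finite.fg_top) key
    (IsLocalRing.maximalIdeal_le_jacobson _)
  intro e
  have he : e ∈ (⊤ : Submodule R (Abelian.Ext (ModuleCat.of R A) (ModuleCat.of R M) n)) := trivial
  rw [this] at he
  exact he

theorem ev_of_injdim (n : ℕ) : ∀ (M : ModuleCat.{u} R), InjdimLE R n M →
    ∀ (A : Type u) [AddCommGroup A] [Module R A] (j : ℕ), n < j → EV R A M j := by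
  induction n with
  | zero =>
    intro M h A _ _ j hj e
    have : Module.Injective R M := h
    have : Injective (ModuleCat.of R M) := Module.injective_object_of_injective_module (R := R) (M := M)
    obtain ⟨j, rfl⟩ : ∃ i, j = i + 1 := ⟨j - 1, by lia⟩
    exact Abelian.Ext.eq_zero_of_injective e
  | succ n ih =>
    rintro M ⟨I, C, f, g, hI, hs, hC⟩ A _ _ j hj
    obtain ⟨j, rfl⟩ : ∃ i, j = i + 1 := ⟨j - 1, by lia⟩
    refine ev_Y1 hs (ih C hC A j (by lia)) ?_
    intro e
    have : Injective (ModuleCat.of R I) := Module.injective_object_of_injective_module (R := R) (M := I)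
    exact Abelian.Ext.eq_zero_of_injective e

theorem injdim_of_ev (n : ℕ) : ∀ (M : ModuleCat.{u} R),
    (∀ I : Ideal R, EV R (R ⧸ I) M (n + 1)) → InjdimLE R n M := by
  induction n with
  | zero =>
    intro M h
    refine Module.Baer.injective ?_
    intro I g
    have hs : IsShortExact R (I.subtype) (I.mkQ) :=
      ⟨Submodule.injective_subtype _, Submodule.mkQ_surjective _, LinearMap.exact_subtype_mkQ _⟩
    obtain ⟨ψ, hψ⟩ := ev_extend hs (h I) g
    exact ⟨ψ, fun x hx => LinearMap.congr_fun hψ ⟨x, hx⟩⟩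
  | succ n ih =>
    intro M h
    obtain ⟨I, _, f, _⟩ := (EnoughInjectives.presentation M).some
    have injf : Function.Injective f.hom := (ModuleCat.mono_iff_injective f).mp ‹_›
    have hI : Module.Injective R I := Module.injective_module_of_injective_object (R := R) (M := I)
    refine ⟨I, ModuleCat.of R (I ⧸ LinearMap.range f.hom), f.hom, (LinearMap.range f.hom).mkQ, hI,
      ses_quot _ injf, ih _ ?_⟩
    intro J
    refine ev_Y3 (ses_quot _ injf) ?_ (h J)
    intro e
    exact Abelian.Ext.eq_zero_of_injective (I := I) e

theorem ev_subsingleton [Subsingleton A] (n : ℕ) : EV R A M n := by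
  cases n with
  | zero => 
    rw [ev_zero_iff]; intro f; ext a; rw [Subsingleton.elim a 0]; simp
  | succ n => exact ev_proj n

theorem ev_primes [IsNoetherianRing R] {j : ℕ} (J : Ideal R)
    (h : ∀ p : Ideal R, p.IsPrime → J ≤ p → EV R (R ⧸ p) M j) (N : Type u) [AddCommGroup N]
    [Module R N] [hN : Module.Finite R N] (hJ : ∀ r ∈ J, ∀ x : N, r • x = 0) : EV R N M j := by
  revert hJ
  refine IsNoetherianRing.induction_on_isQuotientEquivQuotientPrime R hN
    (motive := fun N _ _ _ => (∀ r ∈ J, ∀ x : N, r • x = 0) → EV R N M j) ?_ ?_ ?_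
  · intro N _ _ _ _ _
    exact ev_subsingleton j
  · intro N _ _ _ p e hJ
    refine ev_congr e.symm (h p.1 p.2 ?_)
    intro r hr
    have := hJ r hr (e.symm 1)
    rw [← map_smul, LinearEquiv.map_eq_zero_iff] at this
    rw [← Ideal.Quotient.eq_zero_iff_mem, ← this, Algebra.smul_def, mul_one]; rfl
  · intro N₁ _ _ _ N₂ _ _ _ N₃ _ _ _ f g hf hg hfg h1 h3 hJ
    refine ev_X2 ⟨hf, hg, hfg⟩ (h1 ?_) (h3 ?_)
    · intro r hr x
      apply hf
      rw [map_smul, hJ r hr, map_zero]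
    · intro r hr x
      obtain ⟨y, rfl⟩ := hg x
      rw [← map_smul, hJ r hr, map_zero]

theorem ev_bass [IsLocalRing R] [IsNoetherianRing R] [Module.Finite R M] (s : ℕ)
    (h : ∀ j, s ≤ j → EV R (R ⧸ IsLocalRing.maximalIdeal R) M j) :
    ∀ j, s ≤ j → ∀ (N : Type u) [AddCommGroup N] [Module R N] [Module.Finite R N], EV R N M j := by
  have hp : ∀ p : Ideal R, p.IsPrime → ∀ j, s ≤ j → EV R (R ⧸ p) M j := by
    intro p
    induction p using WellFoundedGT.induction with
    | ind p ih =>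
    intro hp j hj
    by_cases hm : p = IsLocalRing.maximalIdeal R
    · rw [hm]; exact h j hj
    obtain ⟨x, hx, hxp⟩ := SetLike.exists_of_lt
      (lt_of_le_of_ne (IsLocalRing.le_maximalIdeal hp.ne_top) hm)
    have hreg : IsSMulRegular (R ⧸ p) x := by
      intro a b hab
      have : Ideal.Quotient.mk p x ≠ 0 := by rwa [Ne, Ideal.Quotient.eq_zero_iff_mem]
      have hab' : Ideal.Quotient.mk p x * a = Ideal.Quotient.mk p x * b := hab
      exact mul_left_cancel₀ this hab'
    refine ev_nak hx hreg (ev_primes (p ⊔ Ideal.span {x}) ?_ _ ?_)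
    · intro q hq hle
      refine ih q ?_ hq (j + 1) (by lia)
      refine lt_of_le_of_ne (le_sup_left.trans hle) ?_
      rintro rfl
      exact hxp (hle (Ideal.mem_sup_right (Ideal.mem_span_singleton_self x)))
    · intro r hr y
      obtain ⟨y, rfl⟩ := Submodule.mkQ_surjective _ y
      obtain ⟨y, rfl⟩ := Submodule.mkQ_surjective _ y
      obtain ⟨a, ha, b, hb, rfl⟩ := Submodule.mem_sup.1 hr
      obtain ⟨c, rfl⟩ := Ideal.mem_span_singleton'.1 hb
      have ha' : a • p.mkQ y = 0 := by
        rw [← map_smul, Submodule.mkQ_apply, Submodule.Quotient.mk_eq_zero]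
        exact Ideal.mul_mem_right _ _ ha
      rw [add_smul, ← map_smul _ a (p.mkQ y), ← map_smul _ (c * x) (p.mkQ y), ha', map_zero, zero_add, Submodule.mkQ_apply,
        Submodule.Quotient.mk_eq_zero]
      exact ⟨c • p.mkQ y, by simp [smul_smul, mul_comm]⟩
  intro j hj N _ _ _
  exact ev_primes ⊥ (fun p hp' _ => hp p hp' j hj) N (by rintro r rfl x; simp)


theorem reg_or_socle [IsLocalRing R] [IsNoetherianRing R] (I : Ideal R) :
    (∃ y ∈ IsLocalRing.maximalIdeal R, ∀ a, y * a ∈ I → a ∈ I) ∨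
    (∃ s, s ∉ I ∧ ∀ r ∈ IsLocalRing.maximalIdeal R, r * s ∈ I) := by
  by_cases hm : IsLocalRing.maximalIdeal R ∈ associatedPrimes R (R ⧸ I)
  · right
    rw [AssociatedPrimes.mem_iff, isAssociatedPrime_iff] at hm
    obtain ⟨hp, x, hx⟩ := hm
    obtain ⟨s, rfl⟩ := Submodule.mkQ_surjective _ x
    have key : ∀ r, r ∈ IsLocalRing.maximalIdeal R ↔ r * s ∈ I := by
      intro r
      rw [hx, Submodule.mem_colon_singleton, Submodule.mem_bot, ← map_smul, Submodule.mkQ_apply,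
        Submodule.Quotient.mk_eq_zero, smul_eq_mul]
    refine ⟨s, fun h => ?_, fun r hr => (key r).1 hr⟩
    exact hp.ne_top ((Ideal.eq_top_iff_one _).2 ((key 1).2 (by simpa using h)))
  · left
    by_contra! hcon
    have hsub : ((IsLocalRing.maximalIdeal R : Ideal R) : Set R) ⊆
        ⋃ p ∈ associatedPrimes R (R ⧸ I), (p : Set R) := by
      rw [biUnion_associatedPrimes_eq_zero_divisors]
      intro y hy
      obtain ⟨a, h1, h2⟩ := hcon y hy
      refine ⟨I.mkQ a, ?_, ?_⟩
      · rwa [Ne, Submodule.mkQ_apply, Submodule.Quotient.mk_eq_zero]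
      · rwa [← map_smul, Submodule.mkQ_apply, Submodule.Quotient.mk_eq_zero]
    have := (Ideal.subset_union_prime_finite (associatedPrimes.finite R (R ⧸ I)) (f := id) ⊤ ⊤
      (fun p hp _ _ => hp.isPrime)).1 hsub
    obtain ⟨p, hp, hle⟩ := this
    have hpp : p = IsLocalRing.maximalIdeal R :=
      le_antisymm (IsLocalRing.le_maximalIdeal hp.isPrime.ne_top) hle
    exact hm (hpp ▸ hp)

theorem ev_socle [IsLocalRing R] [IsNoetherianRing R] [Module.Finite R M] (I : Ideal R) {s : R}
    (hs : s ∉ I) (hms : ∀ r ∈ IsLocalRing.maximalIdeal R, r * s ∈ I) (t D : ℕ)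
    (h : ∀ j, t ≤ j → EV R (R ⧸ I) M j)
    (hD : ∀ (N : Type u) [AddCommGroup N] [Module R N] (j : ℕ), D < j → EV R N M j) :
    ∀ j, t ≤ j → ∀ (N : Type u) [AddCommGroup N] [Module R N] [Module.Finite R N],
      EV R N M j := by
  have hle : IsLocalRing.maximalIdeal R ≤ LinearMap.ker ((LinearMap.toSpanSingleton R (R ⧸ I) (I.mkQ s))) := by
    intro r hr
    rw [LinearMap.mem_ker, LinearMap.toSpanSingleton_apply, ← map_smul, Submodule.mkQ_apply,
        Submodule.Quotient.mk_eq_zero]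
    exact hms r hr
  let f := Submodule.liftQ _ _ hle
  have hf : Function.Injective f := by
    rw [← LinearMap.ker_eq_bot]
    refine Submodule.ker_liftQ_eq_bot _ _ _ ?_
    refine IsLocalRing.le_maximalIdeal ?_
    intro htop
    apply hs
    have : (1 : R) ∈ LinearMap.ker ((LinearMap.toSpanSingleton R (R ⧸ I) (I.mkQ s))) := by
      rw [htop]; trivial
    rw [LinearMap.mem_ker, LinearMap.toSpanSingleton_apply, one_smul, Submodule.mkQ_apply,
        Submodule.Quotient.mk_eq_zero] at this
    exact this
  have key : ∀ i j, t ≤ j → D < j + i → ∀ (N : Type u) [AddCommGroup N] [Module R N] [Module.Finite R N],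
      EV R N M j := by
    intro i
    induction i with
    | zero => intro j _ h2 N _ _ _; exact hD N j h2
    | succ i ih =>
      intro j h1 h2
      refine ev_bass j (fun j' hj' => ?_) j le_rfl
      exact ev_X1 (ses_quot f hf) (h j' (by lia)) (ih (j' + 1) (by lia) (by lia) _)
  intro j hj
  exact key (D + 1) j hj (by lia)

theorem mul_reg_inj (I : Ideal R) {y : R} (hy : ∀ a, y * a ∈ I → a ∈ I) :
    IsSMulRegular (R ⧸ I) y := by
  rw [isSMulRegular_iff_right_eq_zero_of_smul]
  intro a ha
  obtain ⟨a, rfl⟩ := Submodule.mkQ_surjective _ a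
  rw [← map_smul, Submodule.mkQ_apply, Submodule.Quotient.mk_eq_zero] at ha
  rw [Submodule.mkQ_apply, Submodule.Quotient.mk_eq_zero]
  exact hy a ha

theorem ev_quot_reg (I : Ideal R) {y : R} (hy : ∀ a, y * a ∈ I → a ∈ I) (t : ℕ)
    (h : ∀ j, t ≤ j → EV R (R ⧸ I) M j) :
    ∀ j, t + 1 ≤ j → EV R (R ⧸ (I ⊔ Ideal.span {y})) M j := by
  intro j hj
  obtain ⟨j, rfl⟩ : ∃ i, j = i + 1 := ⟨j - 1, by lia⟩
  have hle : I ≤ I ⊔ Ideal.span {y} := le_sup_left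
  have hs : IsShortExact R (LinearMap.lsmul R (R ⧸ I) y) (Submodule.factor hle) := by
    refine ⟨mul_reg_inj I hy, Submodule.factor_surjective hle, ?_⟩
    intro a
    obtain ⟨a, rfl⟩ := Submodule.mkQ_surjective _ a
    rw [Submodule.factor_mk, Submodule.mkQ_apply, Submodule.mkQ_apply, Submodule.Quotient.mk_eq_zero]
    constructor
    · intro ha
      obtain ⟨b, hb, c, hc, rfl⟩ := Submodule.mem_sup.1 ha
      obtain ⟨d, rfl⟩ := Ideal.mem_span_singleton'.1 hc
      refine ⟨I.mkQ d, ?_⟩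
      rw [LinearMap.lsmul_apply, ← map_smul, Submodule.mkQ_apply, eq_comm, Submodule.Quotient.eq]
      simpa [mul_comm] using hb
    · rintro ⟨c, hc⟩
      obtain ⟨c, rfl⟩ := Submodule.mkQ_surjective _ c
      rw [LinearMap.lsmul_apply, ← map_smul, Submodule.mkQ_apply, eq_comm, Submodule.Quotient.eq] at hc
      refine Submodule.mem_sup.2 ⟨_, hc, c * y, Ideal.mem_span_singleton'.2 ⟨c, rfl⟩, ?_⟩
      simp [mul_comm]
  exact ev_X3 hs (h j (by lia)) (h (j + 1) (by lia))

theorem dim_quot_reg (I : Ideal R) {y : R} (hy : ∀ a, y * a ∈ I → a ∈ I) :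
    ringKrullDim (R ⧸ (I ⊔ Ideal.span {y})) + 1 ≤ ringKrullDim (R ⧸ I) := by
  refine ringKrullDim_succ_le_of_surjective (Ideal.Quotient.factor (le_sup_left))
    (Ideal.Quotient.factor_surjective _) (r := Ideal.Quotient.mk I y) ?_ ?_
  · rw [mem_nonZeroDivisors_iff_right]
    intro a ha
    exact (mul_reg_inj I hy).right_eq_zero_of_smul (by rw [mul_comm] at ha; exact ha)
  · rw [Ideal.Quotient.factor_mk, Ideal.Quotient.eq_zero_iff_mem]
    exact Ideal.mem_sup_right (Ideal.mem_span_singleton_self y)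

theorem exists_prime_ne [IsLocalRing R] [IsNoetherianRing R] (hd : ringKrullDim R = 2) {x : R}
    (hx : x ∈ IsLocalRing.maximalIdeal R) : ∃ q : Ideal R, q.IsPrime ∧ x ∈ q ∧
      q ≠ IsLocalRing.maximalIdeal R := by
  by_contra! hcon
  have hm : IsLocalRing.maximalIdeal R ∈ (Ideal.span {x}).minimalPrimes := by
    refine ⟨⟨inferInstance, by rwa [Ideal.span_singleton_le_iff_mem]⟩, ?_⟩
    rintro q ⟨hq, hxq⟩ _
    exact (hcon q hq (by rwa [Ideal.span_singleton_le_iff_mem] at hxq)).ge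
  have h1 := Ideal.height_le_one_of_isPrincipal_of_mem_minimalPrimes _ _ hm
  have h2 := IsLocalRing.maximalIdeal_height_eq_ringKrullDim (R := R)
  rw [hd] at h2
  have h3 : (IsLocalRing.maximalIdeal R).height = 2 := WithBot.coe_injective (h2.trans rfl)
  rw [h3] at h1
  exact absurd h1 (by decide)


theorem ev_prime_hom [IsLocalRing R] [IsNoetherianRing R] [Module.Finite R M] (q : Ideal R)
    (hq : q.IsPrime) (hne : q ≠ IsLocalRing.maximalIdeal R) (s : ℕ)
    (h : ∀ (N : Type u) [AddCommGroup N] [Module R N] [Module.Finite R N], EV R N M (s + 1)) :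
    EV R (R ⧸ q) M s := by
  obtain ⟨x, hx, hxp⟩ := SetLike.exists_of_lt
      (lt_of_le_of_ne (IsLocalRing.le_maximalIdeal hq.ne_top) hne)
  refine ev_nak hx (mul_reg_inj q ?_) (h _)
  intro a ha
  exact (hq.mem_or_mem ha).resolve_left hxp

theorem ev_hom_k [IsLocalRing R] (q : Ideal R) (hq : q ≤ IsLocalRing.maximalIdeal R)
    (h : EV R (R ⧸ q) M 0) : EV R (R ⧸ IsLocalRing.maximalIdeal R) M 0 := by
  rw [ev_zero_iff] at h ⊢
  intro f
  have := h (f ∘ₗ Submodule.factor hq)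
  rw [← LinearMap.cancel_right (Submodule.factor_surjective hq), this]
  simp

theorem ev_self_zero [IsLocalRing R] [Nontrivial M] : ¬ EV R R M 0 := by
  intro h
  rw [ev_zero_iff] at h
  obtain ⟨m, hm⟩ := exists_ne (0 : M)
  have := LinearMap.congr_fun (h (LinearMap.toSpanSingleton R M m)) 1
  simp at this
  exact hm this

theorem no_depth_zero [IsLocalRing R] [IsNoetherianRing R] [Module.Finite R M] [Nontrivial M]
    (hd : ringKrullDim R = 2)
    (h : ∀ j, 1 ≤ j → ∀ (N : Type u) [AddCommGroup N] [Module R N] [Module.Finite R N],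
      EV R N M j) : False := by
  obtain ⟨q, hq, -, hne⟩ := exists_prime_ne hd (Ideal.zero_mem (IsLocalRing.maximalIdeal R))
  have h1 := ev_hom_k q (IsLocalRing.le_maximalIdeal hq.ne_top)
    (ev_prime_hom (M := M) q hq hne 0 (h 1 le_rfl))
  refine ev_self_zero (R := R) (M := M) (ev_bass 0 (fun j _ => ?_) 0 le_rfl R)
  rcases j with _ | j
  · exact h1
  · exact h _ (by lia) _

theorem ev_zero_of_ann {x : R} (hA : ∀ a : A, x • a = 0) (hx : IsSMulRegular M x) :
    EV R A M 0 := by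
  rw [ev_zero_iff]
  intro f
  ext a
  apply hx.right_eq_zero_of_smul
  rw [← map_smul, hA, map_zero]

theorem no_depth_one [IsLocalRing R] [IsNoetherianRing R] [Module.Finite R M] [Nontrivial M]
    (hd : ringKrullDim R = 2) {x : R} (hx : x ∈ IsLocalRing.maximalIdeal R)
    (hR : IsSMulRegular R x) (hM : IsSMulRegular M x)
    (h : ∀ j, 2 ≤ j → ∀ (N : Type u) [AddCommGroup N] [Module R N] [Module.Finite R N],
      EV R N M j) : False := by
  obtain ⟨q, hq, hxq, hne⟩ := exists_prime_ne hd hx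
  have hann : ∀ p : Ideal R, x ∈ p → ∀ a : R ⧸ p, x • a = 0 := by
    intro p hp a
    obtain ⟨a, rfl⟩ := Submodule.mkQ_surjective _ a
    rw [← map_smul, Submodule.mkQ_apply, Submodule.Quotient.mk_eq_zero]
    exact Ideal.mul_mem_right _ _ hp
  have h1 := ev_prime_hom (M := M) q hq hne 1 (h 2 le_rfl)
  have h2 := ev_Y3 (ses_smul hM) (ev_zero_of_ann (hann q hxq) hM) h1
  have h3 := ev_hom_k q (IsLocalRing.le_maximalIdeal hq.ne_top) h2
  have h4 : EV R (R ⧸ IsLocalRing.maximalIdeal R) M 1 := by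
    intro e
    have hz : e.comp (Abelian.Ext.mk₀ (sesOf (ses_smul hM)).f) (add_zero 1) = 0 := by
      have hf : (sesOf (ses_smul hM)).f = x • 𝟙 (ModuleCat.of R M) := by
        ext a; rfl
      have : e.comp (Abelian.Ext.mk₀ (x • 𝟙 (ModuleCat.of R M))) (add_zero 1) = 0 := by
        rw [Abelian.Ext.mk₀_smul, Abelian.Ext.comp_smul, Abelian.Ext.comp_mk₀_id]
        exact ev_smul_ann (hann _ hx) e
      rw [hf]
      exact this
    obtain ⟨e2, he⟩ := Abelian.Ext.covariant_sequence_exact₁ _ (sesOf_exact (ses_smul hM)) (n₁ := 1)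
      e hz (n₀ := 0) (by lia)
    rw [← he, show e2 = 0 from h3 e2]
    simp
  have h5 := ev_bass (M := M) 1 (fun j hj => by
    obtain rfl | hj := hj.eq_or_lt
    · exact h4
    · exact h _ hj _) 1 le_rfl
  exact ev_self_zero (R := R) (M := M) (ev_nak hx hR (h5 _))

theorem depth_data [IsLocalRing R] [IsNoetherianRing R] [Module.Finite R M] [Nontrivial M]
    (hd : ringKrullDim R = 2) (htf : IsTorsionFreeModule R M)
    (hinj : ∃ n : ℕ, InjdimLE R n (ModuleCat.of R M)) :
    ∃ x y s : R, x ∈ IsLocalRing.maximalIdeal R ∧ IsSMulRegular R x ∧ IsSMulRegular M x ∧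
      (∀ a, y * a ∈ Ideal.span {x} → a ∈ Ideal.span {x}) ∧
      s ∉ Ideal.span {x} ⊔ Ideal.span {y} ∧
      (∀ r ∈ IsLocalRing.maximalIdeal R, r * s ∈ Ideal.span {x} ⊔ Ideal.span {y}) ∧
      y ∈ IsLocalRing.maximalIdeal R ∧
      ∀ j, 3 ≤ j → ∀ (N : Type u) [AddCommGroup N] [Module R N] [Module.Finite R N],
        EV R N M j := by
  obtain ⟨D, hD⟩ := hinj
  have hD' : ∀ (N : Type u) [AddCommGroup N] [Module R N] (j : ℕ), D < j → EV R N M j :=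
    fun N _ _ j hj => ev_of_injdim D _ hD N j hj
  have e0 : ∀ j, 1 ≤ j → EV R (R ⧸ (⊥ : Ideal R)) M j := by
    intro j hj
    obtain ⟨j, rfl⟩ : ∃ i, j = i + 1 := ⟨j - 1, by lia⟩
    exact ev_congr (Submodule.quotEquivOfEqBot _ rfl).symm (ev_proj j)
  rcases reg_or_socle (⊥ : Ideal R) with ⟨x, hx, hreg⟩ | ⟨s, hs, hms⟩
  swap
  · exact (no_depth_zero hd (ev_socle _ hs hms 1 D e0 hD')).elim
  have hR : IsSMulRegular R x := by
    rw [isSMulRegular_iff_right_eq_zero_of_smul]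
    intro a ha
    exact hreg a ha
  have hM : IsSMulRegular M x := by
    rw [isSMulRegular_iff_right_eq_zero_of_smul]
    intro a ha
    refine htf x ?_ a ha
    rw [mem_nonZeroDivisors_iff_right]
    intro b hb
    exact hreg b (by rw [mul_comm] at hb; exact hb)
  have e1 := ev_quot_reg (M := M) ⊥ hreg 1 e0
  have d1 := dim_quot_reg ⊥ hreg
  rw [bot_sup_eq] at e1 d1
  rcases reg_or_socle (Ideal.span {x}) with ⟨y, hy, hreg1⟩ | ⟨s, hs, hms⟩
  swap
  · exact (no_depth_one hd hx hR hM (ev_socle _ hs hms 2 D e1 hD')).elim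
  have e2 := ev_quot_reg (M := M) _ hreg1 2 e1
  have d2 := dim_quot_reg _ hreg1
  rcases reg_or_socle (Ideal.span {x} ⊔ Ideal.span {y}) with ⟨z, hz, hreg2⟩ | ⟨s, hs, hms⟩
  swap
  · exact ⟨x, y, s, hx, hR, hM, hreg1, hs, hms, hy, ev_socle _ hs hms 3 D e2 hD'⟩
  exfalso
  have d3 := dim_quot_reg _ hreg2
  have hne : Ideal.span {x} ⊔ Ideal.span {y} ⊔ Ideal.span {z} ≤ IsLocalRing.maximalIdeal R := by
    simp [Ideal.span_singleton_le_iff_mem, hx, hy, hz]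
  have : Nontrivial (R ⧸ Ideal.span {x} ⊔ Ideal.span {y} ⊔ Ideal.span {z}) := by
    rw [Ideal.Quotient.nontrivial_iff]
    rintro h
    rw [h] at hne
    exact (IsLocalRing.maximalIdeal.isMaximal R).ne_top (top_le_iff.1 hne)
  have d4 := ringKrullDim_nonneg_of_nontrivial (R := R ⧸ Ideal.span {x} ⊔ Ideal.span {y} ⊔ Ideal.span {z})
  have d0 : ringKrullDim (R ⧸ (⊥ : Ideal R)) ≤ 2 := by
    rw [← hd]
    exact ringKrullDim_quotient_le ⊥
  have d5 : (0 : WithBot ℕ∞) + 1 + 1 + 1 ≤ 2 := by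
    refine le_trans ?_ d0
    refine le_trans ?_ d1
    gcongr
    refine le_trans ?_ d2
    gcongr
    refine le_trans ?_ d3
    gcongr
  exact absurd d5 (by decide)


theorem reg_inj {x : R} (f : A →ₗ[R] B) (hf : Function.Injective f) (h : IsSMulRegular B x) :
    IsSMulRegular A x := by
  rw [isSMulRegular_iff_right_eq_zero_of_smul]
  intro a ha
  apply hf
  rw [map_zero]
  apply h.right_eq_zero_of_smul
  rw [← map_smul, ha, map_zero]

theorem reg_pi {x : R} {ι : Type*} (h : IsSMulRegular A x) : IsSMulRegular (ι → A) x := by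
  rw [isSMulRegular_iff_right_eq_zero_of_smul]
  intro a ha
  ext i
  exact h.right_eq_zero_of_smul (congrFun ha i)

theorem reg_free {x : R} [Module.Free R A] (h : IsSMulRegular R x) : IsSMulRegular A x := by
  let b := Module.Free.chooseBasis R A
  rw [isSMulRegular_iff_right_eq_zero_of_smul]
  intro a ha
  rw [← b.forall_coord_eq_zero_iff]
  intro i
  apply h.right_eq_zero_of_smul
  rw [← map_smul, ha, map_zero]

theorem reg_ses {x : R} {f : A →ₗ[R] B} {g : B →ₗ[R] C} (h : IsShortExact R f g)
    (hA : IsSMulRegular A x) (hC : IsSMulRegular C x) : IsSMulRegular B x := by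
  rw [isSMulRegular_iff_right_eq_zero_of_smul]
  intro b hb
  have h1 : g b = 0 := hC.right_eq_zero_of_smul (by rw [← map_smul, hb, map_zero])
  obtain ⟨a, rfl⟩ := (h.2.2 b).1 h1
  have h2 : a = 0 := hA.right_eq_zero_of_smul (h.1 (by rw [map_smul, hb, map_zero]))
  rw [h2, map_zero]

theorem reg_syz {x : R} (hR : IsSMulRegular R x) (n : ℕ) : ∀ (S K : ModuleCat.{u} R),
    IsSyzygy R n S K → IsSMulRegular K x → IsSMulRegular S x := by
  induction n with
  | zero =>
    rintro S K ⟨e⟩ hK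
    exact reg_inj e.toLinearMap e.injective hK
  | succ n ih =>
    rintro S K ⟨W, F, f, g, hF, _, hs, hW⟩ hK
    exact ih S W hW (reg_inj f hs.1 (reg_free hR))

theorem ev_syz (n j : ℕ) : ∀ (S K : ModuleCat.{u} R),
    IsSyzygy R n S K → EV R K M (n + j + 1) → EV R S M (j + 1) := by
  induction n with
  | zero =>
    rintro S K ⟨e⟩ hK
    rw [Nat.zero_add] at hK
    exact ev_congr e.symm hK
  | succ n ih =>
    rintro S K ⟨W, F, f, g, hF, _, hs, hW⟩ hK
    refine ih S W hW (ev_X1 hs (ev_proj _) ?_)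
    rw [show n + j + 1 + 1 = n + 1 + j + 1 by ring]
    exact hK

theorem ev_pi {n b : ℕ} (h : EV R A M n) : EV R (Fin b → A) M n := by
  intro e
  have h1 : (ModuleCat.ofHom (LinearMap.id : (Fin b → A) →ₗ[R] (Fin b → A))) =
      ∑ i : Fin b, (ModuleCat.ofHom (LinearMap.proj (R := R) (φ := fun _ : Fin b => A) i)) ≫
        ModuleCat.ofHom (LinearMap.single R (fun _ : Fin b => A) i) := by
    ext x j
    simp [ModuleCat.hom_sum, Pi.single_apply]
  have h2 : e = (Abelian.Ext.mk₀ (ModuleCat.ofHom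
      (LinearMap.id : (Fin b → A) →ₗ[R] (Fin b → A)))).comp e (zero_add n) := by
    exact (Abelian.Ext.mk₀_id_comp e).symm
  rw [h2, h1, Abelian.Ext.mk₀_sum, Abelian.Ext.sum_comp]
  refine Finset.sum_eq_zero fun i _ => ?_
  rw [← Abelian.Ext.mk₀_comp_mk₀_assoc, h (Abelian.Ext.comp _ _ _), Abelian.Ext.comp_zero]

theorem retract_step [IsLocalRing R] [IsNoetherianRing R] [Module.Finite R M] {x : R}
    (hx : x ∈ IsLocalRing.maximalIdeal R) (hR : IsSMulRegular R x)
    (hv : ∀ j, 3 ≤ j → ∀ (N : Type u) [AddCommGroup N] [Module R N] [Module.Finite R N],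
      EV R N M j) (K L : ModuleCat.{u} R) [Module.Finite R K] (hK : IsSMulRegular K x)
    (i : M →ₗ[R] K) (r : K →ₗ[R] M) (hir : r ∘ₗ i = LinearMap.id) (a b n : ℕ) (ha : 1 ≤ a)
    (hn : 1 ≤ n) (hs : ReducingStep R K L a b n) :
    IsSMulRegular L x ∧ ∃ (i : M →ₗ[R] L) (r : L →ₗ[R] M), r ∘ₗ i = LinearMap.id := by
  obtain ⟨W, f, g, hW, hs⟩ := hs
  refine ⟨reg_ses hs (reg_pi hK) (reg_pi (reg_syz hR n _ _ hW hK)), ?_⟩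
  obtain ⟨a, rfl⟩ : ∃ a', a = a' + 1 := ⟨a - 1, by lia⟩
  have h1 : EV R W M 1 := ev_syz n 0 W K hW (ev_nak hx hK (hv _ (by lia) _))
  obtain ⟨ψ, hψ⟩ := ev_extend hs (ev_pi h1)
    (r ∘ₗ LinearMap.proj (R := R) (φ := fun _ : Fin (a + 1) => (K : Type u)) 0)
  refine ⟨f ∘ₗ LinearMap.single R (fun _ : Fin (a + 1) => (K : Type u)) 0 ∘ₗ i, ψ, ?_⟩
  rw [← LinearMap.comp_assoc, hψ]
  ext m
  simpa using LinearMap.congr_fun hir m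

theorem retract_seq [IsLocalRing R] [IsNoetherianRing R] [Module.Finite R M] {x : R}
    (hx : x ∈ IsLocalRing.maximalIdeal R) (hR : IsSMulRegular R x) (hM : IsSMulRegular M x)
    (hv : ∀ j, 3 ≤ j → ∀ (N : Type u) [AddCommGroup N] [Module R N] [Module.Finite R N],
      EV R N M j) (hr : rGdim R (ModuleCat.of R M) ≠ ⊤) :
    ∃ (N : ModuleCat.{u} R) (m : ℕ) (i : M →ₗ[R] N) (r : N →ₗ[R] M),
      r ∘ₗ i = LinearMap.id ∧ GdimLE R m N := by
  have hne : {n : ℕ∞ | ∃ r : ℕ, n = (r : ℕ∞) ∧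
      HasReducingSeq R (fun N => ∃ m : ℕ, GdimLE R m N) (ModuleCat.of R M) r}.Nonempty := by
    by_contra h
    rw [Set.not_nonempty_iff_eq_empty] at h
    apply hr
    rw [rGdim, ReducingDim, h, sInf_empty]
  obtain ⟨_, r, _, K, a, b, n, h0, hfin, hstep, m, hm⟩ := hne
  have key : ∀ i : Fin (r + 1), IsSMulRegular (K i) x ∧
      ∃ (f : M →ₗ[R] K i) (g : K i →ₗ[R] M), g ∘ₗ f = LinearMap.id := by
    intro i
    induction i using Fin.induction with
    | zero =>
      rw [h0]
      exact ⟨hM, LinearMap.id, LinearMap.id, rfl⟩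
    | succ i ih =>
      obtain ⟨h1, f, g, hfg⟩ := ih
      obtain ⟨ha, _, hn, hs⟩ := hstep i
      have := hfin i.castSucc
      exact retract_step hx hR hv _ _ h1 f g hfg _ _ _ ha hn hs
  obtain ⟨_, f, g, hfg⟩ := key (Fin.last r)
  exact ⟨_, m, f, g, hfg, hm⟩


theorem desc_map (p : A →ₗ[R] B) (hp : Function.Surjective p) (θ : A →ₗ[R] C)
    (h : ∀ a, p a = 0 → θ a = 0) : ∃ α : B →ₗ[R] C, α ∘ₗ p = θ := by
  refine ⟨(LinearMap.ker p).liftQ θ h ∘ₗ (p.quotKerEquivOfSurjective hp).symm.toLinearMap, ?_⟩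
  ext a
  have : (p.quotKerEquivOfSurjective hp).symm (p a) = Submodule.Quotient.mk a := by
    rw [LinearEquiv.symm_apply_eq]; rfl
  simp only [LinearMap.comp_apply, LinearEquiv.coe_coe, this]
  rfl

theorem finite_ses {f : A →ₗ[R] B} {g : B →ₗ[R] C} (h : IsShortExact R f g)
    [Module.Finite R A] [Module.Finite R C] : Module.Finite R B :=
  Module.Finite.of_exact h.2.2 h.2.1

/-- A concrete (non-categorical) totally reflexive package. -/
def TRP (X : Type u) [AddCommGroup X] [Module R X] : Prop :=
  Module.Finite R X ∧ Function.Bijective (Module.Dual.eval R X) ∧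
    (∀ i, EV R X R (i + 1)) ∧ (∀ i, EV R (Module.Dual R X) R (i + 1))

theorem trp_of_tr (h : IsTotallyReflexive R X) : TRP (R := R) X :=
  ⟨h.1, h.2.1, fun i => extVanish_ev R _ _ i (h.2.2.1 (i + 1) (by lia)),
    fun i => extVanish_ev R _ _ i (h.2.2.2 (i + 1) (by lia))⟩

theorem trp_step [IsNoetherianRing R] (h : TRP (R := R) X) :
    ∃ (F C : ModuleCat.{u} R) (f : X →ₗ[R] F) (g : F →ₗ[R] C), Module.Free R F ∧
      Module.Finite R F ∧ IsShortExact R f g ∧ TRP (R := R) C := by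
  obtain ⟨hfin, hev, h1, h2⟩ := h
  have hfA : Module.Finite R (Module.Dual R X) := inferInstance
  obtain ⟨n, π, hπ⟩ := Module.Finite.exists_fin' R (Module.Dual R X)
  let G := Fin n → R
  let L := LinearMap.ker π
  let F := Module.Dual R G
  let C := Module.Dual R L
  let f : X →ₗ[R] F := π.dualMap ∘ₗ Module.Dual.eval R X
  let g : F →ₗ[R] C := L.subtype.dualMap
  have hfx : ∀ x g0, f x g0 = π g0 x := fun x g0 => rfl
  have hgx : ∀ μ (l : L), g μ l = μ l := fun μ l => rfl
  have hs : IsShortExact R f g := by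
    refine ⟨?_, ?_, ?_⟩
    · exact (LinearMap.dualMap_injective_of_surjective hπ).comp hev.1
    · intro l
      exact ev_extend (ses_ker π hπ) (h2 0) l
    · intro μ
      constructor
      · intro hμ
        obtain ⟨α, hα⟩ := desc_map π hπ μ (fun a ha => by
          rw [← hgx μ ⟨a, ha⟩, hμ]; rfl)
        obtain ⟨x, rfl⟩ := hev.2 α
        exact ⟨x, hα⟩
      · rintro ⟨x, rfl⟩
        ext l
        rw [hgx, hfx, show π l = 0 from l.2]
        rfl
  have hL : Function.Bijective (Module.Dual.eval R L) := by
    constructor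
    · rw [injective_iff_map_eq_zero]
      intro l hl
      ext i
      exact LinearMap.congr_fun hl (LinearMap.proj i ∘ₗ L.subtype)
    · intro Λ
      obtain ⟨g0, hg0⟩ := (Module.bijective_dual_eval R G).2 (Λ ∘ₗ g)
      have hg0' : ∀ μ, Λ (g μ) = μ g0 := fun μ => (LinearMap.congr_fun hg0 μ).symm
      have hz : π g0 = 0 := by
        ext x
        rw [← hfx, ← hg0', hs.2.2.apply_apply_eq_zero, map_zero]
        rfl
      refine ⟨⟨g0, hz⟩, ?_⟩
      ext l
      obtain ⟨μ, rfl⟩ := hs.2.1 l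
      rw [hg0']
      rfl
  refine ⟨ModuleCat.of R F, ModuleCat.of R C, f, g, inferInstanceAs (Module.Free R F),
    inferInstanceAs (Module.Finite R F), hs, inferInstanceAs (Module.Finite R C), ?_, ?_, ?_⟩
  · have hb : Function.Bijective (Module.Dual.eval R L).dualMap := by
      exact (LinearEquiv.ofBijective _ hL).dualMap.bijective
    have hc : (Module.Dual.eval R L).dualMap ∘ (Module.Dual.eval R C) = id := by
      ext φ l; rfl
    exact (Function.Bijective.of_comp_iff' hb _).1 (hc ▸ Function.bijective_id)
  · intro i
    rcases i with _ | i
    · refine ev_one_of_extend hs (ev_proj (A := F) 0) ?_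
      intro φ
      obtain ⟨g0, rfl⟩ := hπ φ
      exact ⟨Module.Dual.eval R G g0, rfl⟩
    · exact ev_X3 hs (h1 i) (ev_proj (A := F) _)
  · intro i
    exact ev_congr (LinearEquiv.ofBijective _ hL)
      (ev_X1 (ses_ker π hπ) (ev_proj _) (h2 (i + 1)))

variable (R) in
/-- Modules with `Ext^1(-, R) = 0` that can be pushed `n` steps into free modules. -/
def XC : ℕ → ModuleCat.{u} R → Prop
  | 0, X => Module.Finite R X ∧ EV R X R 1
  | n + 1, X => Module.Finite R X ∧ EV R X R 1 ∧
      ∃ (F C : ModuleCat.{u} R) (f : X →ₗ[R] F) (g : F →ₗ[R] C),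
        Module.Free R F ∧ Module.Finite R F ∧ IsShortExact R f g ∧ XC n C

theorem XC.fin {n : ℕ} {X : ModuleCat.{u} R} (h : XC R n X) : Module.Finite R X := by
  cases n <;> exact h.1

theorem XC.ev {n : ℕ} {X : ModuleCat.{u} R} (h : XC R n X) : EV R X R 1 := by
  cases n
  · exact h.2
  · exact h.2.1

theorem xc_of_trp [IsNoetherianRing R] (n : ℕ) : ∀ X : ModuleCat.{u} R, TRP (R := R) X → XC R n X := by
  induction n with
  | zero => intro X h; exact ⟨h.1, h.2.2.1 0⟩
  | succ n ih =>
    intro X h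
    obtain ⟨F, C, f, g, h1, h2, h3, h4⟩ := trp_step h
    exact ⟨h.1, h.2.2.1 0, F, C, f, g, h1, h2, h3, ih C h4⟩

theorem sub_ses (S : Submodule R (A × B)) (p0 : A →ₗ[R] X) (p1 : B →ₗ[R] Y)
    (h0 : Function.Surjective p0) (h1 : Function.Surjective p1)
    (hS0 : ∀ u, (u, (0 : B)) ∈ S ↔ p0 u = 0) (hS1 : ∀ v, (∃ u, (u, v) ∈ S) ↔ p1 v = 0) :
    ∃ (α : X →ₗ[R] ((A × B) ⧸ S)) (β : ((A × B) ⧸ S) →ₗ[R] Y), IsShortExact R α β := by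
  obtain ⟨α, hα⟩ := desc_map p0 h0 (S.mkQ ∘ₗ LinearMap.inl R A B) (fun a ha => by
    simpa using (hS0 a).2 ha)
  have hα' : ∀ a, α (p0 a) = S.mkQ (a, 0) := fun a => LinearMap.congr_fun hα a
  let β : ((A × B) ⧸ S) →ₗ[R] Y := S.liftQ (p1 ∘ₗ LinearMap.snd R A B) (by
    rintro ⟨u, v⟩ h
    exact (hS1 v).1 ⟨u, h⟩)
  have hβ : ∀ a b, β (S.mkQ (a, b)) = p1 b := fun a b => rfl
  refine ⟨α, β, ?_, ?_, ?_⟩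
  · rw [injective_iff_map_eq_zero]
    intro x hx
    obtain ⟨a, rfl⟩ := h0 x
    rw [hα', Submodule.mkQ_apply, Submodule.Quotient.mk_eq_zero] at hx
    exact (hS0 a).1 hx
  · intro y
    obtain ⟨b, rfl⟩ := h1 y
    exact ⟨S.mkQ (0, b), hβ _ _⟩
  · intro z
    obtain ⟨⟨a, b⟩, rfl⟩ := Submodule.mkQ_surjective _ z
    rw [hβ]
    constructor
    · intro hb
      obtain ⟨u, hu⟩ := (hS1 b).2 hb
      refine ⟨p0 (a - u), ?_⟩
      rw [hα', Submodule.mkQ_apply, Submodule.mkQ_apply, eq_comm, Submodule.Quotient.eq]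
      simpa using hu
    · rintro ⟨x, hx⟩
      obtain ⟨c, rfl⟩ := h0 x
      rw [← hβ a b, ← hx, hα', hβ, map_zero]

theorem xc_ext (n : ℕ) : ∀ (X Y Z : ModuleCat.{u} R) (f : X →ₗ[R] Y) (g : Y →ₗ[R] Z),
    IsShortExact R f g → XC R n X → XC R n Z → XC R n Y := by
  induction n with
  | zero =>
    intro X Y Z f g h hX hZ
    have := hX.fin
    have := hZ.fin
    exact ⟨finite_ses h, ev_X2 h hX.ev hZ.ev⟩
  | succ n ih =>
    intro X Y Z f g h hX hZ
    have := hX.fin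
    have := hZ.fin
    refine ⟨finite_ses h, ev_X2 h hX.ev hZ.ev, ?_⟩
    obtain ⟨_, _, F, C, j, p, _, _, hj, hC⟩ := hX
    obtain ⟨_, hZ1, G, D, k, q, _, _, hk, hD⟩ := hZ
    obtain ⟨φ, hφ⟩ := ev_extend h (ev_free (A := F) hZ1) j
    have hφ' : ∀ x, φ (f x) = j x := fun x => LinearMap.congr_fun hφ x
    let Φ : Y →ₗ[R] (F × G) := φ.prod (k ∘ₗ g)
    have hinj : Function.Injective Φ := by
      rw [injective_iff_map_eq_zero]
      intro y hy
      have hy1 : φ y = 0 := congrArg Prod.fst hy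
      have hy2 : k (g y) = 0 := congrArg Prod.snd hy
      obtain ⟨x, rfl⟩ := (h.2.2 y).1 (hk.1 (hy2.trans (map_zero k).symm))
      rw [hφ'] at hy1
      rw [hj.1 (hy1.trans (map_zero j).symm), map_zero]
    obtain ⟨α, β, hαβ⟩ := sub_ses (LinearMap.range Φ) p q hj.2.1 hk.2.1 (by
      intro u
      rw [hj.2.2 u]
      constructor
      · rintro ⟨y, hy⟩
        have hy1 : φ y = u := congrArg Prod.fst hy
        have hy2 : k (g y) = 0 := congrArg Prod.snd hy
        obtain ⟨x, rfl⟩ := (h.2.2 y).1 (hk.1 (hy2.trans (map_zero k).symm))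
        exact ⟨x, by rw [← hφ', hy1]⟩
      · rintro ⟨x, rfl⟩
        refine ⟨f x, ?_⟩
        simp [Φ, hφ', h.2.2.apply_apply_eq_zero]) (by
      intro v
      rw [hk.2.2 v]
      constructor
      · rintro ⟨u, y, hy⟩
        exact ⟨g y, congrArg Prod.snd hy⟩
      · rintro ⟨z, rfl⟩
        obtain ⟨y, rfl⟩ := h.2.1 z
        exact ⟨φ y, y, rfl⟩)
    exact ⟨ModuleCat.of R (F × G), ModuleCat.of R ((F × G) ⧸ LinearMap.range Φ), Φ,
      (LinearMap.range Φ).mkQ, inferInstanceAs (Module.Free R (F × G)),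
      inferInstanceAs (Module.Finite R (F × G)), ses_quot Φ hinj,
      ih C _ D α β hαβ hC hD⟩

theorem gdim_approx [IsNoetherianRing R] (m : ℕ) : ∀ (N : ModuleCat.{u} R), GdimLE R m N → ∀ n,
    ∃ (P X : ModuleCat.{u} R) (f : N →ₗ[R] P) (g : P →ₗ[R] X) (l : ℕ),
      IsShortExact R f g ∧ XC R n X ∧ PdimLE R l P := by
  induction m with
  | zero =>
    intro N h n
    obtain ⟨_, _, F, C, f, g, h1, h2, h3, h4⟩ := xc_of_trp (n + 1) N (trp_of_tr h)
    exact ⟨F, C, f, g, 0, h3, h4, h2, inferInstance⟩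
  | succ m ih =>
    rintro N ⟨X0, K, f, g, hX0, hfg, hK⟩ n
    obtain ⟨P, X', a, b, l, hab, hX', hP⟩ := ih K hK (n + 1)
    obtain ⟨_, hX1, F1, C1, j1, p1, _, _, hj1, hC1⟩ := hX'
    obtain ⟨_, _, F0, C0, j0, p0, _, _, hj0, hC0⟩ := xc_of_trp (n + 1) X0 (trp_of_tr hX0)
    obtain ⟨h, hh⟩ := ev_extend hab (ev_free (A := F0) hX1) (j0 ∘ₗ f)
    have hh' : ∀ k, h (a k) = j0 (f k) := fun k => LinearMap.congr_fun hh k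
    let Φ : P →ₗ[R] (F0 × F1) := h.prod (j1 ∘ₗ b)
    let Ψ : (X0 × P) →ₗ[R] (F0 × F1) := (LinearMap.inl R F0 F1 ∘ₗ j0).coprod Φ
    have hΨ : ∀ x p, Ψ (x, p) = (j0 x + h p, j1 (b p)) := by
      intro x p; simp [Ψ, Φ]
    have hΦinj : Function.Injective Φ := by
      rw [injective_iff_map_eq_zero]
      intro y hy
      have hy1 : h y = 0 := congrArg Prod.fst hy
      have hy2 : j1 (b y) = 0 := congrArg Prod.snd hy
      obtain ⟨x, rfl⟩ := (hab.2.2 y).1 (hj1.1 (hy2.trans (map_zero j1).symm))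
      rw [hh'] at hy1
      rw [hfg.1 ((hj0.1 (hy1.trans (map_zero j0).symm)).trans (map_zero f).symm), map_zero]
    obtain ⟨α, β, hαβ⟩ := sub_ses (LinearMap.range Ψ) p0 p1 hj0.2.1 hj1.2.1 (by
      intro u
      rw [hj0.2.2 u]
      constructor
      · rintro ⟨⟨x, y⟩, hy⟩
        rw [hΨ] at hy
        have hy1 : j0 x + h y = u := congrArg Prod.fst hy
        have hy2 : j1 (b y) = 0 := congrArg Prod.snd hy
        obtain ⟨k, rfl⟩ := (hab.2.2 y).1 (hj1.1 (hy2.trans (map_zero j1).symm))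
        exact ⟨x + f k, by rw [map_add, ← hh', hy1]⟩
      · rintro ⟨x, rfl⟩
        exact ⟨(x, 0), by simp [hΨ]⟩) (by
      intro v
      rw [hj1.2.2 v]
      constructor
      · rintro ⟨u, ⟨x, y⟩, hy⟩
        rw [hΨ] at hy
        exact ⟨b y, congrArg Prod.snd hy⟩
      · rintro ⟨z, rfl⟩
        obtain ⟨y, rfl⟩ := hab.2.1 z
        exact ⟨h y, (0, y), by simp [hΨ]⟩)
    have hle : LinearMap.range Φ ≤ LinearMap.range Ψ := by
      rintro _ ⟨p, rfl⟩
      exact ⟨(0, p), by simp [Ψ]⟩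
    obtain ⟨ν, hν⟩ := desc_map g hfg.2.1
      ((LinearMap.range Φ).mkQ ∘ₗ LinearMap.inl R F0 F1 ∘ₗ j0) (by
        intro x hx
        obtain ⟨k, rfl⟩ := (hfg.2.2 x).1 hx
        simp only [LinearMap.comp_apply, Submodule.mkQ_apply, Submodule.Quotient.mk_eq_zero]
        exact ⟨a k, by simp [Φ, hh', hab.2.2.apply_apply_eq_zero]⟩)
    have hν' : ∀ x, ν (g x) = (LinearMap.range Φ).mkQ (j0 x, 0) :=
      fun x => LinearMap.congr_fun hν x
    refine ⟨ModuleCat.of R ((F0 × F1) ⧸ LinearMap.range Φ),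
      ModuleCat.of R ((F0 × F1) ⧸ LinearMap.range Ψ), ν, Submodule.factor hle, l + 1,
      ⟨?_, Submodule.factor_surjective hle, ?_⟩, xc_ext n C0 _ C1 α β hαβ hC0 hC1,
      ModuleCat.of R (F0 × F1), P, Φ, (LinearMap.range Φ).mkQ,
      inferInstanceAs (Module.Finite R (F0 × F1)), inferInstanceAs (Module.Projective R (F0 × F1)),
      ses_quot Φ hΦinj, hP⟩
    · rw [injective_iff_map_eq_zero]
      intro z hz
      obtain ⟨x, rfl⟩ := hfg.2.1 z
      rw [hν', Submodule.mkQ_apply, Submodule.Quotient.mk_eq_zero] at hz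
      obtain ⟨p, hp⟩ := hz
      have hy1 : h p = j0 x := congrArg Prod.fst hp
      have hy2 : j1 (b p) = 0 := congrArg Prod.snd hp
      obtain ⟨k, rfl⟩ := (hab.2.2 p).1 (hj1.1 (hy2.trans (map_zero j1).symm))
      rw [hh'] at hy1
      rw [← hj0.1 hy1, hfg.2.2.apply_apply_eq_zero]
    · intro z
      obtain ⟨⟨u, v⟩, rfl⟩ := Submodule.mkQ_surjective _ z
      rw [Submodule.factor_mk, Submodule.mkQ_apply, Submodule.Quotient.mk_eq_zero]
      constructor
      · rintro ⟨⟨x, p⟩, hp⟩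
        refine ⟨g x, ?_⟩
        rw [hν', Submodule.mkQ_apply, Submodule.mkQ_apply, eq_comm, Submodule.Quotient.eq]
        refine ⟨p, ?_⟩
        rw [hΨ] at hp
        rw [← hp]
        simp [Φ]
      · rintro ⟨n, hn⟩
        obtain ⟨x, rfl⟩ := hfg.2.1 n
        rw [hν', Submodule.mkQ_apply, Submodule.mkQ_apply, eq_comm, Submodule.Quotient.eq] at hn
        obtain ⟨p, hp⟩ := hn
        refine ⟨(x, p), ?_⟩
        rw [hΨ]
        have hy1 : h p = u - j0 x := congrArg Prod.fst hp
        have hy2 : j1 (b p) = v - 0 := congrArg Prod.snd hp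
        rw [hy1, hy2]
        simp


theorem ev_pdim (n : ℕ) : ∀ (P : ModuleCat.{u} R), PdimLE R n P → ∀ j, n < j → EV R P M j := by
  induction n with
  | zero =>
    rintro P ⟨_, _⟩ j hj
    obtain ⟨j, rfl⟩ : ∃ i, j = i + 1 := ⟨j - 1, by lia⟩
    exact ev_proj j
  | succ n ih =>
    rintro P ⟨X, K, f, g, _, _, hs, hK⟩ j hj
    obtain ⟨j, rfl⟩ : ∃ i, j = i + 1 := ⟨j - 1, by lia⟩
    exact ev_X3 hs (ih K hK j (by lia)) (ev_proj j)

theorem ev_retract (i : A →ₗ[R] B) (r : B →ₗ[R] A) (h : r ∘ₗ i = LinearMap.id) {n : ℕ}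
    (hB : EV R B M n) : EV R A M n := by
  intro x
  have h1 : (Abelian.Ext.mk₀ (ModuleCat.ofHom i)).comp
      ((Abelian.Ext.mk₀ (ModuleCat.ofHom r)).comp x (zero_add n)) (zero_add n) = x := by
    rw [Abelian.Ext.mk₀_comp_mk₀_assoc, ← ModuleCat.ofHom_comp, h]
    simp
  rw [← h1, hB (Abelian.Ext.comp _ _ _), Abelian.Ext.comp_zero]

theorem proj_of_ev [Module.Finite R A] (h : ∀ (N : Type u) [AddCommGroup N] [Module R N], EV R A N 1) :
    Module.Projective R A := by
  obtain ⟨n, π, hπ⟩ := Module.Finite.exists_fin' R A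
  obtain ⟨ρ, hρ⟩ := ev_extend (ses_ker π hπ) (h _) LinearMap.id
  obtain ⟨σ, hσ⟩ := desc_map π hπ (LinearMap.id - (LinearMap.ker π).subtype ∘ₗ ρ) (by
    intro a ha
    have := LinearMap.congr_fun hρ ⟨a, ha⟩
    simp only [LinearMap.comp_apply, Submodule.subtype_apply, LinearMap.id_apply] at this
    simp [this])
  refine Module.Projective.of_split σ π ?_
  rw [← LinearMap.cancel_right hπ, LinearMap.comp_assoc, hσ]
  ext a
  simp

theorem free_of_ev [IsLocalRing R] [Module.Finite R A]
    (h : ∀ (N : Type u) [AddCommGroup N] [Module R N], EV R A N 1) : Module.Free R A := by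
  have := proj_of_ev h
  exact Module.free_of_flat_of_isLocalRing

theorem coord_sup {x y : R} [Module.Free R A] [Module.Finite R A] (w : A)
    (h : ∀ i, (Module.Free.chooseBasis R A).coord i w ∈ Ideal.span {x} ⊔ Ideal.span {y}) :
    ∃ u v, w = x • u + y • v := by
  have h' : ∀ i, ∃ a b : R, (Module.Free.chooseBasis R A).coord i w = x * a + y * b := by
    intro i
    obtain ⟨p, hp, q, hq, hpq⟩ := Submodule.mem_sup.1 (h i)
    obtain ⟨a, rfl⟩ := Ideal.mem_span_singleton'.1 hp
    obtain ⟨b, rfl⟩ := Ideal.mem_span_singleton'.1 hq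
    exact ⟨a, b, by rw [← hpq]; ring⟩
  choose a b hab using h'
  refine ⟨(Module.Free.chooseBasis R A).equivFun.symm a, (Module.Free.chooseBasis R A).equivFun.symm b, ?_⟩
  apply (Module.Free.chooseBasis R A).equivFun.injective
  rw [map_add, map_smul, map_smul, LinearEquiv.apply_symm_apply, LinearEquiv.apply_symm_apply]
  ext i
  exact hab i

theorem coord_span {x : R} [Module.Free R A] [Module.Finite R A] (w : A)
    (h : ∀ i, (Module.Free.chooseBasis R A).coord i w ∈ Ideal.span {x}) :
    ∃ u, w = x • u := by
  obtain ⟨u, v, huv⟩ := coord_sup (x := x) (y := 0) w (fun i => Ideal.mem_sup_left (h i))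
  exact ⟨u, by simpa using huv⟩

theorem key_chase {x y s : R} [Module.Free R X] [Module.Finite R X]
    [Module.Free R A] [Module.Finite R A] [Module.Free R B] [Module.Finite R B]
    (hR : IsSMulRegular R x) (hy : ∀ a, y * a ∈ Ideal.span {x} → a ∈ Ideal.span {x})
    {f : A →ₗ[R] B} {g : B →ₗ[R] C} (h : IsShortExact R f g) {i : C →ₗ[R] X} {p : X →ₗ[R] Y}
    (h' : IsShortExact R i p) (hY : IsSMulRegular Y x) (c : A)
    (hc : ∀ k, s * (Module.Free.chooseBasis R B).coord k (f c) ∈ Ideal.span {x} ⊔ Ideal.span {y}) :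
    ∀ k, s * (Module.Free.chooseBasis R A).coord k c ∈ Ideal.span {x} ⊔ Ideal.span {y} := by
  obtain ⟨u, v, huv⟩ := coord_sup (x := x) (y := y) (s • f c) (by
    intro k; rw [map_smul]; exact hc k)
  have hC : IsSMulRegular C x := reg_inj i h'.1 (reg_free hR)
  have e1 : x • g u + y • g v = 0 := by
    rw [← map_smul, ← map_smul, ← map_add, ← huv, map_smul, h.2.2.apply_apply_eq_zero, smul_zero]
  obtain ⟨w, hw⟩ := coord_span (x := x) (i (g v)) (by
    intro k
    apply hy
    have e2 := congrArg (fun t => (Module.Free.chooseBasis R X).coord k (i t)) e1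
    simp only [map_add, map_smul, map_zero, smul_eq_mul] at e2
    rw [eq_neg_of_add_eq_zero_right e2]
    exact neg_mem (Ideal.mul_mem_right _ _ (Ideal.mem_span_singleton_self x)))
  have hpw : p w = 0 := by
    apply hY.right_eq_zero_of_smul
    rw [← map_smul, ← hw, h'.2.2.apply_apply_eq_zero]
  obtain ⟨k, rfl⟩ := (h'.2.2 w).1 hpw
  rw [← map_smul] at hw
  have hgv := h'.1 hw
  obtain ⟨k', rfl⟩ := h.2.1 k
  obtain ⟨c1, hc1⟩ := (h.2.2 (v - x • k')).1 (by rw [map_sub, map_smul, hgv, sub_self])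
  have e3 : g (u + y • k') = 0 := by
    apply hC.right_eq_zero_of_smul
    rw [map_add, map_smul, smul_add, smul_comm x y, ← hgv, e1]
  obtain ⟨c2, hc2⟩ := (h.2.2 _).1 e3
  have e4 : s • c = x • c2 + y • c1 := by
    apply h.1
    rw [map_add, map_smul, map_smul, map_smul, hc1, hc2, huv, smul_add, smul_sub, smul_comm x y]
    abel
  intro k
  have e5 := congrArg (fun t => (Module.Free.chooseBasis R A).coord k t) e4
  simp only [map_add, map_smul, smul_eq_mul] at e5
  rw [e5]
  exact add_mem (Ideal.mem_sup_left (Ideal.mul_mem_right _ _ (Ideal.mem_span_singleton_self x)))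
    (Ideal.mem_sup_right (Ideal.mul_mem_right _ _ (Ideal.mem_span_singleton_self y)))

theorem key_free [IsLocalRing R] [IsNoetherianRing R] {x y s : R}
    [Module.Free R X] [Module.Finite R X]
    [Module.Free R A] [Module.Finite R A] [Module.Free R B] [Module.Finite R B]
    (hR : IsSMulRegular R x) (hy : ∀ a, y * a ∈ Ideal.span {x} → a ∈ Ideal.span {x})
    (hs : s ∉ Ideal.span {x} ⊔ Ideal.span {y})
    (hms : ∀ r ∈ IsLocalRing.maximalIdeal R, r * s ∈ Ideal.span {x} ⊔ Ideal.span {y})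
    {f : A →ₗ[R] B} {g : B →ₗ[R] C} (h : IsShortExact R f g) {i : C →ₗ[R] X} {p : X →ₗ[R] Y}
    (h' : IsShortExact R i p) (hY : IsSMulRegular Y x) : Module.Free R C := by
  refine Module.free_of_lTensor_residueField_injective f g h.2.1 h.2.2 ?_
  rw [injective_iff_map_eq_zero]
  intro t ht
  obtain ⟨c, rfl⟩ := TensorProduct.mk_surjective R A (IsLocalRing.ResidueField R)
    IsLocalRing.residue_surjective t
  simp only [TensorProduct.mk_apply, LinearMap.lTensor_tmul] at ht ⊢
  have h1 : ∀ k, (Module.Free.chooseBasis R B).coord k (f c) ∈ IsLocalRing.maximalIdeal R := by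
    intro k
    have := congrArg (((Module.Free.chooseBasis R B).coord k).lTensor
      (IsLocalRing.ResidueField R)) ht
    rw [LinearMap.lTensor_tmul, map_zero] at this
    have := congrArg (TensorProduct.rid R (IsLocalRing.ResidueField R)) this
    rw [TensorProduct.rid_tmul, map_zero, Algebra.smul_def, mul_one] at this
    exact (IsLocalRing.residue_eq_zero_iff _).1 this
  have h2 := key_chase (s := s) hR hy h h' hY c (fun k => by rw [mul_comm]; exact hms _ (h1 k))
  have h3 : ∀ k, (Module.Free.chooseBasis R A).coord k c ∈ IsLocalRing.maximalIdeal R := by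
    intro k hu
    apply hs
    exact (Ideal.mul_unit_mem_iff_mem _ hu).1 (h2 k)
  rw [← (Module.Free.chooseBasis R A).sum_repr c, TensorProduct.tmul_sum]
  refine Finset.sum_eq_zero fun k _ => ?_
  rw [← TensorProduct.smul_tmul, Algebra.smul_def, mul_one,
    show algebraMap R (IsLocalRing.ResidueField R) ((Module.Free.chooseBasis R A).repr c k) = 0 from
      (IsLocalRing.residue_eq_zero_iff _).2 (h3 k), TensorProduct.zero_tmul]

theorem ker_free [IsLocalRing R] [IsNoetherianRing R] {x y s : R}
    (hR : IsSMulRegular R x) (hy : ∀ a, y * a ∈ Ideal.span {x} → a ∈ Ideal.span {x})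
    (hs : s ∉ Ideal.span {x} ⊔ Ideal.span {y})
    (hms : ∀ r ∈ IsLocalRing.maximalIdeal R, r * s ∈ Ideal.span {x} ⊔ Ideal.span {y}) (m : ℕ) :
    ∀ (W : Type u) [AddCommGroup W] [Module R W] [Module.Finite R W], IsSMulRegular W x →
      (∀ (N : Type u) [AddCommGroup N] [Module R N], EV R W N (m + 2)) →
      ∀ (n : ℕ) (π : (Fin n → R) →ₗ[R] W), Function.Surjective π →
        Module.Free R (LinearMap.ker π) := by
  induction m with
  | zero =>
    intro W _ _ _ hW hv n π hπ
    exact free_of_ev fun N _ _ => ev_X1 (ses_ker π hπ) (ev_proj _) (hv N)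
  | succ m ih =>
    intro W _ _ _ hW hv n π hπ
    obtain ⟨n', π', hπ'⟩ := Module.Finite.exists_fin' R (LinearMap.ker π)
    have := ih (LinearMap.ker π) (reg_inj _ (Submodule.injective_subtype _) (reg_free hR))
      (fun N _ _ => ev_X1 (ses_ker π hπ) (ev_proj _) (hv N)) n' π' hπ'
    exact key_free hR hy hs hms (ses_ker π' hπ') (ses_ker π hπ) hW

theorem exists_functional [IsLocalRing R] [Module.Finite R M] [Nontrivial M] [Module.Projective R B]
    (π : B →ₗ[R] M) (hπ : Function.Surjective π) : ∃ (φ : B →ₗ[R] R) (b : B), φ b = 1 ∧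
      ∀ a, π a = 0 → φ a ∈ IsLocalRing.maximalIdeal R := by
  obtain ⟨N, hN, -⟩ := (eq_top_or_exists_le_coatom (⊥ : Submodule R M)).resolve_left bot_ne_top
  have hsimp : IsSimpleModule R (M ⧸ N) := isSimpleModule_iff_isCoatom.2 hN
  obtain ⟨I, hI, ⟨e⟩⟩ := isSimpleModule_iff_quot_maximal.1 hsimp
  obtain rfl := IsLocalRing.eq_maximalIdeal hI
  let l := e.toLinearMap ∘ₗ N.mkQ ∘ₗ π
  have hl : Function.Surjective l :=
    e.surjective.comp ((Submodule.mkQ_surjective _).comp hπ)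
  obtain ⟨φ, hφ⟩ := Module.projective_lifting_property
    (Submodule.mkQ (IsLocalRing.maximalIdeal R)) l (Submodule.mkQ_surjective _)
  have hφ' : ∀ b, φ b ∈ IsLocalRing.maximalIdeal R ↔ l b = 0 := by
    intro b
    rw [← hφ, LinearMap.comp_apply, Submodule.mkQ_apply, Submodule.Quotient.mk_eq_zero]
  obtain ⟨b, hb⟩ := hl (Submodule.Quotient.mk 1)
  have hu : IsUnit (φ b) := by
    by_contra hu
    have h1 : l b = 0 := (hφ' b).1 hu
    rw [hb, Submodule.Quotient.mk_eq_zero] at h1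
    exact hI.ne_top ((Ideal.eq_top_iff_one _).2 h1)
  obtain ⟨c, hc⟩ := hu.exists_left_inv
  refine ⟨φ, c • b, by rw [map_smul, smul_eq_mul, hc], fun a ha => (hφ' a).2 ?_⟩
  simp [l, ha]

theorem ev_ring_of_pd [IsLocalRing R] {f : A →ₗ[R] B} {π : B →ₗ[R] M} (h : IsShortExact R f π)
    [Module.Free R A] [Module.Finite R A] [Module.Projective R B] [Module.Finite R M] [Nontrivial M]
    {j : ℕ} (hv : EV R (R ⧸ IsLocalRing.maximalIdeal R) M j) :
    EV R (R ⧸ IsLocalRing.maximalIdeal R) R j := by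
  intro e
  obtain ⟨φ, b, hb, hφ⟩ := exists_functional π h.2.1
  obtain ⟨e', he'⟩ := Abelian.Ext.covariant_sequence_exact₂ _ (sesOf_exact h) (n := j)
    (e.comp (Abelian.Ext.mk₀ (ModuleCat.ofHom (LinearMap.toSpanSingleton R B b))) (add_zero j)) (hv _)
  let β := Module.Free.chooseBasis R A
  have h1 : ModuleCat.ofHom (φ ∘ₗ f) = ∑ i, (φ (f (β i))) • ModuleCat.ofHom (β.coord i) := by
    ext a
    simp only [ModuleCat.hom_sum, ModuleCat.hom_smul, ModuleCat.hom_ofHom, LinearMap.sum_apply,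
      LinearMap.smul_apply, LinearMap.comp_apply, smul_eq_mul]
    conv_lhs => rw [← β.sum_repr a, map_sum, map_sum]
    simp [mul_comm]
  have h2 : ModuleCat.ofHom (LinearMap.toSpanSingleton R B b) ≫ ModuleCat.ofHom φ = 𝟙 (ModuleCat.of R R) := by
    ext
    simpa using hb
  have h3 : e = (e.comp (Abelian.Ext.mk₀ (ModuleCat.ofHom (LinearMap.toSpanSingleton R B b)))
      (add_zero j)).comp (Abelian.Ext.mk₀ (ModuleCat.ofHom φ)) (add_zero j) := by
    rw [Abelian.Ext.comp_assoc_of_third_deg_zero, Abelian.Ext.mk₀_comp_mk₀, h2, Abelian.Ext.comp_mk₀_id]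
  have h4 : e'.comp (Abelian.Ext.mk₀ (ModuleCat.ofHom (φ ∘ₗ f))) (add_zero j) = 0 := by
    rw [h1, Abelian.Ext.mk₀_sum, Abelian.Ext.comp_sum]
    refine Finset.sum_eq_zero fun i _ => ?_
    rw [Abelian.Ext.mk₀_smul, Abelian.Ext.comp_smul]
    refine ev_smul_ann ?_ _
    intro a
    obtain ⟨a, rfl⟩ := Submodule.mkQ_surjective _ a
    rw [← map_smul, Submodule.mkQ_apply, Submodule.Quotient.mk_eq_zero]
    exact Ideal.mul_mem_right _ _ (hφ _ (h.2.2.apply_apply_eq_zero _))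
  rw [h3, ← he', Abelian.Ext.comp_assoc_of_third_deg_zero, Abelian.Ext.mk₀_comp_mk₀]
  exact h4

theorem ev_one_xc (hv : ∀ (N : Type u) [AddCommGroup N] [Module R N] [Module.Finite R N],
    EV R N M 3) (X : ModuleCat.{u} R) (h : XC R 2 X) : EV R X M 1 := by
  obtain ⟨_, _, F, C, f, g, _, _, h1, _, _, F', C', f', g', _, _, h2, h3⟩ := h
  have := h3.fin
  exact ev_X1 h1 (ev_proj 0) (ev_X1 h2 (ev_proj 1) (hv C'))

theorem main_aux [IsNoetherianRing R] [IsLocalRing R]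
    (hd : ringKrullDim R = 2) [Module.Finite R M] [Nontrivial M]
    (htf : IsTorsionFreeModule R M)
    (hinj : ∃ n : ℕ, InjdimLE R n (ModuleCat.of R M))
    (hr : rGdim R (ModuleCat.of R M) ≠ ⊤) :
    IsGorensteinRing R := by
  obtain ⟨x, y, s, hx, hR, hM, hy, hs, hms, -, hv⟩ := depth_data hd htf hinj
  obtain ⟨N, m, i, r, hir, hN⟩ := retract_seq hx hR hM hv hr
  obtain ⟨P, X, f, g, l, hfg, hX, hP⟩ := gdim_approx m N hN 2
  obtain ⟨ρ, hρ⟩ := ev_extend hfg (ev_one_xc (hv 3 le_rfl) X hX) r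
  have hret : ρ ∘ₗ (f ∘ₗ i) = LinearMap.id := by
    rw [← LinearMap.comp_assoc, hρ, hir]
  obtain ⟨n, π, hπ⟩ := Module.Finite.exists_fin' R M
  have hfree : Module.Free R (LinearMap.ker π) := ker_free hR hy hs hms l M hM
    (fun N _ _ => ev_retract _ _ hret (ev_pdim l P hP (l + 2) (by lia))) n π hπ
  refine ⟨2, injdim_of_ev 2 _ fun I => ?_⟩
  exact ev_bass 3 (fun j hj => ev_ring_of_pd (ses_ker π hπ) (hv j hj _)) 3 le_rfl (R ⧸ I)

end Aux

theorem stmt6 (R : Type u) [CommRing R] [IsNoetherianRing R] [IsLocalRing R]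
    (hd : ringKrullDim R = 2)
    (M : Type u) [AddCommGroup M] [Module R M] [Module.Finite R M] [Nontrivial M]
    (htf : IsTorsionFreeModule R M)
    (hinj : ∃ n : ℕ, InjdimLE R n (ModuleCat.of R M))
    (hr : rGdim R (ModuleCat.of R M) ≠ ⊤) :
    IsGorensteinRing R := by
  exact main_aux hd htf hinj hr
end

section
/- Let R be a commutative Noetherian local ring with maximal ideal m, let M be a finitely generated R-module, and let x ∈ m be a non zero-divisor on both R and M. Then the reducing Gorenstein dimension of the R/xR-module M/xM is at most the reducing Gorenstein dimension of the R-module M. -/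
open CategoryTheory Pointwise

universe u

variable (R : Type u) [CommRing R]

variable {R}

lemma extVanish_iff (X Y : ModuleCat.{u} R) (n : ℕ) :
    ExtVanish R X Y (n+1) ↔ Subsingleton (Abelian.Ext X Y (n+1)) := by
  let P := ProjectiveResolution.of X
  have e := P.isoExt (R := R) (n+1) Y
  have h1 : ExtVanish R X Y (n+1) ↔ ∀ f : P.complex.X (n+1) ⟶ Y, P.complex.d (n+2) (n+1) ≫ f = 0 →
      ∃ g : P.complex.X n ⟶ Y, P.complex.d (n+1) n ≫ g = f := by
    unfold ExtVanish
    rw [e.toLinearEquiv.toEquiv.subsingleton_congr, ← ModuleCat.isZero_iff_subsingleton,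
      ← HomologicalComplex.exactAt_iff_isZero_homology,
      HomologicalComplex.exactAt_iff' _ n (n+1) (n+2) (by simp) (by simp),
      ShortComplex.moduleCat_exact_iff]
    rfl
  rw [h1]
  constructor
  · intro h
    refine subsingleton_of_forall_eq 0 fun a => ?_
    obtain ⟨f, hf, rfl⟩ := P.extMk_surjective a (n+2) rfl
    rw [P.extMk_eq_zero_iff f (n+2) rfl hf n rfl]
    exact h f hf
  · intro h f hf
    rw [← P.extMk_eq_zero_iff f (n+2) rfl hf n rfl]
    exact Subsingleton.elim _ _

section ExtLemmas

variable {A B C Y : Type u} [AddCommGroup A] [Module R A] [AddCommGroup B] [Module R B]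
    [AddCommGroup C] [Module R C] [AddCommGroup Y] [Module R Y]

/-- The categorical short exact sequence attached to an elementary one. -/
lemma isShortExact_cat {f : A →ₗ[R] B} {g : B →ₗ[R] C} (h : IsShortExact R f g) :
    ∃ w, (ShortComplex.mk (ModuleCat.ofHom f) (ModuleCat.ofHom g) w).ShortExact := by
  obtain ⟨h1, h2, h3⟩ := h
  refine ⟨?_, ?_⟩
  · ext a
    exact h3.apply_apply_eq_zero a
  · have : Mono (ModuleCat.ofHom f) := (ModuleCat.mono_iff_injective _).2 h1
    have : Epi (ModuleCat.ofHom g) := (ModuleCat.epi_iff_surjective _).2 h2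
    refine ShortComplex.ShortExact.mk ?_
    rw [ShortComplex.ShortExact.moduleCat_exact_iff_function_exact]
    exact h3

lemma extVanish_shift {f : A →ₗ[R] B} {g : B →ₗ[R] C} (h : IsShortExact R f g)
    [Module.Projective R B] (n : ℕ) :
    ExtVanish R C Y (n+2) ↔ ExtVanish R A Y (n+1) := by
  obtain ⟨w, hS⟩ := isShortExact_cat h
  have hp : Projective (ModuleCat.of R B) := inferInstance
  rw [show ExtVanish R C Y (n+2) ↔ _ from
      extVanish_iff (ModuleCat.of R C) (ModuleCat.of R Y) (n+1),
    show ExtVanish R A Y (n+1) ↔ _ from extVanish_iff (ModuleCat.of R A) (ModuleCat.of R Y) n]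
  constructor
  · intro hC
    refine subsingleton_of_forall_eq 0 fun a => ?_
    obtain ⟨b, hb⟩ := Abelian.Ext.contravariant_sequence_exact₁ hS (ModuleCat.of R Y) (n₀ := n+1)
      (n₁ := n+2) a (by omega) (Subsingleton.elim (α := Abelian.Ext (ModuleCat.of R C) _ _) _ _)
    rw [← hb, Abelian.Ext.eq_zero_of_projective (P := ModuleCat.of R B) b]
    simp
  · intro hA
    refine subsingleton_of_forall_eq 0 fun a => ?_
    obtain ⟨b, hb⟩ := Abelian.Ext.contravariant_sequence_exact₃ hS (ModuleCat.of R Y) (n₀ := n+1)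
      (n₁ := n+2) a (Abelian.Ext.eq_zero_of_projective (P := ModuleCat.of R B) _) (by omega)
    have hb0 : b = 0 := Subsingleton.elim (α := Abelian.Ext (ModuleCat.of R A) _ _) _ _
    rw [← hb, hb0]
    simp

lemma extVanish_one {f : A →ₗ[R] B} {g : B →ₗ[R] C} (h : IsShortExact R f g)
    [Module.Projective R B] :
    ExtVanish R C Y 1 ↔ ∀ φ : A →ₗ[R] Y, ∃ ψ : B →ₗ[R] Y, ψ ∘ₗ f = φ := by
  obtain ⟨w, hS⟩ := isShortExact_cat h
  have hp : Projective (ModuleCat.of R B) := inferInstance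
  rw [show ExtVanish R C Y 1 ↔ _ from
      extVanish_iff (ModuleCat.of R C) (ModuleCat.of R Y) 0]
  constructor
  · intro hC φ
    obtain ⟨b, hb⟩ := Abelian.Ext.contravariant_sequence_exact₁ hS (ModuleCat.of R Y) (n₀ := 0)
      (n₁ := 1) (Abelian.Ext.mk₀ (ModuleCat.ofHom φ)) (by omega)
      (Subsingleton.elim (α := Abelian.Ext (ModuleCat.of R C) _ _) _ _)
    obtain ⟨b, rfl⟩ := Abelian.Ext.mk₀_bijective _ _ |>.2 b
    rw [Abelian.Ext.mk₀_comp_mk₀] at hb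
    have := (Abelian.Ext.mk₀_bijective _ _).1 hb
    exact ⟨b.hom, by simpa using congrArg ModuleCat.Hom.hom this⟩
  · intro hA
    refine subsingleton_of_forall_eq 0 fun a => ?_
    obtain ⟨b, hb⟩ := Abelian.Ext.contravariant_sequence_exact₃ hS (ModuleCat.of R Y) (n₀ := 0)
      (n₁ := 1) a (Abelian.Ext.eq_zero_of_projective (P := ModuleCat.of R B) _) (by omega)
    obtain ⟨b, rfl⟩ := Abelian.Ext.mk₀_bijective _ _ |>.2 b
    obtain ⟨ψ, hψ⟩ := hA b.hom
    have hb' : b = ModuleCat.ofHom f ≫ ModuleCat.ofHom ψ := by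
      ext a
      exact (LinearMap.congr_fun hψ a).symm
    rw [← hb, hb', ← Abelian.Ext.mk₀_comp_mk₀]
    exact hS.extClass_comp_assoc _

lemma extVanish_congr (e : A ≃ₗ[R] B) (n : ℕ) (h : ExtVanish R A Y n) : ExtVanish R B Y n := by
  unfold ExtVanish at *
  let i := ((Ext R (ModuleCat.{u} R) n).mapIso e.symm.toModuleIso.op).app (ModuleCat.of R Y)
  exact (i.toLinearEquiv.toEquiv.subsingleton_congr).1 h

/-- Every module has a free cover. -/
lemma exists_cover (X : Type u) [AddCommGroup X] [Module R X] :
    ∃ (K F : ModuleCat.{u} R) (f : K →ₗ[R] F) (g : F →ₗ[R] X), Module.Free R F ∧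
      IsShortExact R f g := by
  let g : (X →₀ R) →ₗ[R] X := Finsupp.linearCombination R id
  refine ⟨ModuleCat.of R (LinearMap.ker g), ModuleCat.of R (X →₀ R), (LinearMap.ker g).subtype, g,
    inferInstanceAs (Module.Free R (X →₀ R)), Subtype.val_injective,
    Finsupp.linearCombination_id_surjective R X, LinearMap.exact_subtype_ker_map g⟩

end ExtLemmas

section Reduction

variable {x : R}

lemma divide (hxR : IsSMulRegular R x) {L : Type u} [AddCommGroup L] [Module R L]
    (h : L →ₗ[R] R) (hh : ∀ l, h l ∈ Ideal.span {x}) : ∃ θ : L →ₗ[R] R, h = x • θ := by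
  have : ∀ l, ∃ r, x * r = h l := fun l => by
    obtain ⟨r, hr⟩ := Ideal.mem_span_singleton.1 (hh l)
    exact ⟨r, hr.symm⟩
  choose θ hθ using this
  refine ⟨⟨⟨θ, fun a b => hxR ?_⟩, fun c a => hxR ?_⟩, ?_⟩
  · change x * _ = x * _
    rw [hθ, map_add, mul_add, hθ, hθ]
  · change x * θ (c • a) = x * (c * θ a)
    rw [hθ, map_smul, ← hθ a, smul_eq_mul]; ring
  · ext l
    exact (hθ l).symm

lemma exists_lift (hxR : IsSMulRegular R x) {K : Type u} [AddCommGroup K] [Module R K]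
    (hK : ExtVanish R K R 1) (φ : K →ₗ[R] R ⧸ Ideal.span {x}) :
    ∃ φ' : K →ₗ[R] R, ∀ k, Ideal.Quotient.mk _ (φ' k) = φ k := by
  obtain ⟨L, G, f, g, hG, hs⟩ := exists_cover (R := R) K
  have hGp : Module.Projective R G := Module.Projective.of_free
  obtain ⟨ψ, hψ⟩ := Module.projective_lifting_property (Ideal.span {x}).mkQ (φ ∘ₗ g)
    (Submodule.mkQ_surjective _)
  have hψ' : ∀ b, Ideal.Quotient.mk (Ideal.span {x}) (ψ b) = φ (g b) := LinearMap.congr_fun hψ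
  obtain ⟨θ, hθ⟩ := divide hxR (ψ ∘ₗ f) (fun l => by
    rw [← Ideal.Quotient.eq_zero_iff_mem]
    simp [hψ', hs.2.2.apply_apply_eq_zero])
  obtain ⟨θ', hθ'⟩ := (extVanish_one hs).1 hK θ
  have hker : LinearMap.ker g ≤ LinearMap.ker (ψ - x • θ') := by
    intro b hb
    obtain ⟨l, rfl⟩ := (hs.2.2 b).1 hb
    have := LinearMap.congr_fun hθ l
    rw [← hθ'] at this
    simp at this ⊢
    rw [this, sub_self]
  let e := g.quotKerEquivOfSurjective hs.2.1
  refine ⟨(LinearMap.ker g).liftQ _ hker ∘ₗ e.symm.toLinearMap, fun k => ?_⟩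
  obtain ⟨b, rfl⟩ := hs.2.1 k
  have : e.symm (g b) = Submodule.Quotient.mk b := by
    rw [LinearEquiv.symm_apply_eq]; rfl
  simp [this, hψ']

end Reduction

section Reduction2

variable {x : R}

/-- Reduction modulo `x` of a linear map, as an `R/x`-linear map. -/
noncomputable def qmap (x : R) {A B : Type u} [AddCommGroup A] [Module R A] [AddCommGroup B]
    [Module R B] (f : A →ₗ[R] B) :
    QuotSMulTop x A →ₗ[R ⧸ Ideal.span {x}] QuotSMulTop x B :=
  (QuotSMulTop.map x f).extendScalarsOfSurjective Ideal.Quotient.mk_surjective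

lemma isShortExact_qmap {A B C : Type u} [AddCommGroup A] [Module R A] [AddCommGroup B]
    [Module R B] [AddCommGroup C] [Module R C] {f : A →ₗ[R] B} {g : B →ₗ[R] C}
    (h : IsShortExact R f g) (hC : IsSMulRegular C x) :
    IsShortExact (R ⧸ Ideal.span {x}) (qmap x f) (qmap x g) := by
  obtain ⟨h1, h2, h3⟩ := h
  refine ⟨?_, QuotSMulTop.map_surjective x h2, QuotSMulTop.map_exact x h3 h2⟩
  have h0 : Function.Exact (0 : A →ₗ[R] A) f :=
    (LinearMap.exact_zero_iff_injective A f).2 h1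
  have := QuotSMulTop.map_first_exact_on_four_term_exact_of_isSMulRegular_last h0 h3 hC
  rw [map_zero] at this
  exact (LinearMap.exact_zero_iff_injective _ _).1 this

lemma regular_free (hxR : IsSMulRegular R x) (F : Type u) [AddCommGroup F] [Module R F]
    [Module.Free R F] : IsSMulRegular F x := by
  let b := Module.Free.chooseBasis R F
  intro a c h
  apply b.repr.injective
  ext i
  apply hxR
  have := congrArg (fun y => b.repr y i) h
  simpa using this

lemma regular_of_injective {A B : Type u} [AddCommGroup A] [Module R A] [AddCommGroup B]
    [Module R B] (f : A →ₗ[R] B) (hf : Function.Injective f) (hB : IsSMulRegular B x) :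
    IsSMulRegular A x := hB.of_injective f hf

lemma regular_mid {A B C : Type u} [AddCommGroup A] [Module R A] [AddCommGroup B]
    [Module R B] [AddCommGroup C] [Module R C] {f : A →ₗ[R] B} {g : B →ₗ[R] C}
    (h : IsShortExact R f g) (hA : IsSMulRegular A x) (hC : IsSMulRegular C x) :
    IsSMulRegular B x :=
  isSMulRegular_of_range_eq_ker h.1 h.2.2.linearMap_ker_eq.symm hA hC

lemma regular_dual (hxR : IsSMulRegular R x) (X : Type u) [AddCommGroup X] [Module R X] :
    IsSMulRegular (Module.Dual R X) x := by
  intro f g h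
  ext a
  exact hxR (LinearMap.congr_fun h a)

/-- `X* → (X/x)*`. -/
noncomputable def bar {X : Type u} [AddCommGroup X] [Module R X] (f : Module.Dual R X) :
    Module.Dual (R ⧸ Ideal.span {x}) (QuotSMulTop x X) :=
  LinearMap.extendScalarsOfSurjective (R := R) Ideal.Quotient.mk_surjective
    (Submodule.liftQ (x • (⊤ : Submodule R X)) ((Ideal.span {x}).mkQ ∘ₗ f) (by
      intro a ha
      obtain ⟨b, -, rfl⟩ := (Submodule.mem_smul_pointwise_iff_exists _ _ _).1 ha
      simp only [LinearMap.mem_ker, LinearMap.comp_apply, map_smul]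
      exact (Submodule.Quotient.mk_eq_zero _).2
        (Ideal.mul_mem_right _ _ (Ideal.mem_span_singleton_self x))))

lemma bar_mk {X : Type u} [AddCommGroup X] [Module R X] (f : Module.Dual R X) (a : X) :
    bar (x := x) f (Submodule.Quotient.mk a) = Ideal.Quotient.mk _ (f a) := rfl

lemma quot_ext {X Z : Type u} [AddCommGroup X] [Module R X] [AddCommGroup Z]
    [Module (R ⧸ Ideal.span {x}) Z] {g h : QuotSMulTop x X →ₗ[R ⧸ Ideal.span {x}] Z}
    (H : ∀ a : X, g (Submodule.Quotient.mk a) = h (Submodule.Quotient.mk a)) : g = h := by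
  refine LinearMap.ext fun a => ?_
  obtain ⟨a, rfl⟩ := Submodule.Quotient.mk_surjective _ a
  exact H a

lemma bar_add {X : Type u} [AddCommGroup X] [Module R X] (f g : Module.Dual R X) :
    bar (x := x) (f + g) = bar f + bar g :=
  quot_ext fun a => by
    rw [LinearMap.add_apply, bar_mk, bar_mk, bar_mk, LinearMap.add_apply, map_add]

lemma bar_smul {X : Type u} [AddCommGroup X] [Module R X] (r : R) (f : Module.Dual R X) :
    bar (x := x) (r • f) = Ideal.Quotient.mk (Ideal.span {x}) r • bar f :=
  quot_ext fun a => by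
    rw [LinearMap.smul_apply, bar_mk, bar_mk, LinearMap.smul_apply, smul_eq_mul, smul_eq_mul,
      map_mul]

/-- A dual element of `X/x`, composed with `X → X/x`. -/
noncomputable def pull {X : Type u} [AddCommGroup X] [Module R X]
    (g : Module.Dual (R ⧸ Ideal.span {x}) (QuotSMulTop x X)) : X →ₗ[R] R ⧸ Ideal.span {x} :=
  (g.restrictScalars R) ∘ₗ (x • (⊤ : Submodule R X)).mkQ

lemma bar_surj (hxR : IsSMulRegular R x) {X : Type u} [AddCommGroup X] [Module R X]
    (hX : ExtVanish R X R 1) : Function.Surjective (bar (x := x) (X := X)) := by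
  intro g
  obtain ⟨φ, hφ⟩ := exists_lift hxR hX (pull g)
  refine ⟨φ, ?_⟩
  refine quot_ext fun a => ?_
  rw [bar_mk, hφ]
  rfl

lemma extVanish_quot (hxR : IsSMulRegular R x) (n : ℕ) : ∀ (X : Type u) [AddCommGroup X]
    [Module R X], IsSMulRegular X x → (∀ i, 1 ≤ i → ExtVanish R X R i) →
    ExtVanish (R ⧸ Ideal.span {x}) (QuotSMulTop x X) (R ⧸ Ideal.span {x}) (n+1) := by
  induction n with
  | zero =>
    intro X _ _ hX hE
    obtain ⟨K, F, f, g, hF, hs⟩ := exists_cover (R := R) X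
    have hFp : Module.Projective R F := Module.Projective.of_free
    have hs' := isShortExact_qmap hs hX
    have hFp' : Module.Projective (R ⧸ Ideal.span {x}) (QuotSMulTop x F) :=
      Module.Projective.of_free
    refine (extVanish_one hs').2 fun φ => ?_
    have hK : ExtVanish R K R 1 := (extVanish_shift hs 0).1 (hE 2 (by omega))
    obtain ⟨φ', rfl⟩ := bar_surj hxR hK φ
    obtain ⟨ψ, rfl⟩ := (extVanish_one hs).1 (hE 1 le_rfl) φ'
    refine ⟨bar ψ, ?_⟩
    refine quot_ext fun a => ?_
    rfl
  | succ n ih =>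
    intro X _ _ hX hE
    obtain ⟨K, F, f, g, hF, hs⟩ := exists_cover (R := R) X
    have hFp : Module.Projective R F := Module.Projective.of_free
    have hs' := isShortExact_qmap hs hX
    have hFp' : Module.Projective (R ⧸ Ideal.span {x}) (QuotSMulTop x F) :=
      Module.Projective.of_free
    refine (extVanish_shift hs' n).2 (ih K (regular_of_injective f hs.1 (regular_free hxR F)) ?_)
    intro i hi
    obtain ⟨j, rfl⟩ : ∃ j, i = j + 1 := ⟨i - 1, by omega⟩
    exact (extVanish_shift hs j).1 (hE (j+2) (by omega))

lemma dual_equiv (hxR : IsSMulRegular R x) {X : Type u} [AddCommGroup X] [Module R X]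
    (hX : ExtVanish R X R 1) :
    Nonempty (QuotSMulTop x (Module.Dual R X) ≃ₗ[R ⧸ Ideal.span {x}]
      Module.Dual (R ⧸ Ideal.span {x}) (QuotSMulTop x X)) := by
  let β : Module.Dual R X →ₗ[R] Module.Dual (R ⧸ Ideal.span {x}) (QuotSMulTop x X) :=
    { toFun := bar
      map_add' := bar_add
      map_smul' := fun r f => by
        rw [bar_smul, RingHom.id_apply]
        exact algebraMap_smul (R ⧸ Ideal.span {x}) r (bar (x := x) f) }
  have hker : LinearMap.ker β = x • ⊤ := by
    ext f
    rw [LinearMap.mem_ker, Submodule.mem_smul_pointwise_iff_exists]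
    constructor
    · intro hf
      obtain ⟨θ, hθ⟩ := divide hxR f (fun l => by
        rw [← Ideal.Quotient.eq_zero_iff_mem, ← bar_mk]
        exact LinearMap.congr_fun hf _)
      exact ⟨θ, trivial, hθ.symm⟩
    · rintro ⟨θ, -, rfl⟩
      refine quot_ext fun a => ?_
      change bar (x • θ) _ = 0
      rw [bar_mk, Ideal.Quotient.eq_zero_iff_mem]
      exact Ideal.mul_mem_right _ _ (Ideal.mem_span_singleton_self x)
  exact ⟨LinearEquiv.extendScalarsOfSurjective (R := R) Ideal.Quotient.mk_surjective
    ((Submodule.quotEquivOfEq _ _ hker.symm).trans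
      (β.quotKerEquivOfSurjective (bar_surj hxR hX)))⟩

lemma totallyReflexive_regular (hxR : IsSMulRegular R x) {X : Type u} [AddCommGroup X]
    [Module R X] (h : IsTotallyReflexive R X) : IsSMulRegular X x :=
  regular_of_injective (Module.Dual.eval R X) h.2.1.1 (regular_dual hxR _)

lemma finite_quot (X : Type u) [AddCommGroup X] [Module R X] [Module.Finite R X] :
    Module.Finite (R ⧸ Ideal.span {x}) (QuotSMulTop x X) :=
  Module.Finite.of_restrictScalars_finite R _ _

lemma totallyReflexive_quot (hxR : IsSMulRegular R x) {X : Type u} [AddCommGroup X]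
    [Module R X] (h : IsTotallyReflexive R X) :
    IsTotallyReflexive (R ⧸ Ideal.span {x}) (QuotSMulTop x X) := by
  have hreg := totallyReflexive_regular hxR h
  obtain ⟨hfin, hev, hE, hE'⟩ := h
  refine ⟨finite_quot X, ⟨?_, ?_⟩, ?_, ?_⟩
  · rw [injective_iff_map_eq_zero]
    intro a ha
    obtain ⟨a, rfl⟩ := Submodule.Quotient.mk_surjective _ a
    obtain ⟨θ, hθ⟩ := divide hxR (Module.Dual.eval R X a) (fun f => by
      rw [← Ideal.Quotient.eq_zero_iff_mem]
      exact LinearMap.congr_fun ha (bar f))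
    obtain ⟨b, rfl⟩ := hev.2 θ
    rw [← map_smul] at hθ
    rw [hev.1 hθ, Submodule.Quotient.mk_eq_zero]
    exact Submodule.smul_mem_pointwise_smul _ _ _ trivial
  · intro ψ
    let ψ' : Module.Dual R X →ₗ[R] R ⧸ Ideal.span {x} :=
      { toFun := fun f => ψ (bar f)
        map_add' := fun f g => by
          rw [bar_add, map_add]
        map_smul' := fun r f => by
          rw [RingHom.id_apply, bar_smul, map_smul]
          rfl }
    obtain ⟨φ, hφ⟩ := exists_lift hxR (hE' 1 le_rfl) ψ'
    obtain ⟨a, rfl⟩ := hev.2 φ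
    refine ⟨Submodule.Quotient.mk a, ?_⟩
    refine LinearMap.ext fun g => ?_
    obtain ⟨f, rfl⟩ := bar_surj hxR (hE 1 le_rfl) g
    exact hφ f
  · intro i hi
    obtain ⟨j, rfl⟩ : ∃ j, i = j + 1 := ⟨i - 1, by omega⟩
    exact extVanish_quot hxR j X hreg hE
  · intro i hi
    obtain ⟨j, rfl⟩ : ∃ j, i = j + 1 := ⟨i - 1, by omega⟩
    obtain ⟨e⟩ := dual_equiv hxR (hE 1 le_rfl)
    exact extVanish_congr e _ (extVanish_quot hxR j _ (regular_dual hxR X) hE')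

lemma gdimLE_quot (hxR : IsSMulRegular R x) (n : ℕ) : ∀ (M : ModuleCat.{u} R),
    IsSMulRegular M x → GdimLE R n M →
    GdimLE (R ⧸ Ideal.span {x}) n (ModuleCat.of _ (QuotSMulTop x M)) := by
  induction n with
  | zero => intro M _ h; exact totallyReflexive_quot hxR h
  | succ n ih =>
    rintro M hM ⟨X, K, f, g, hX, hs, hK⟩
    exact ⟨ModuleCat.of _ (QuotSMulTop x X), ModuleCat.of _ (QuotSMulTop x K), qmap x f, qmap x g,
      totallyReflexive_quot hxR hX, isShortExact_qmap hs hM,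
      ih K (regular_of_injective f hs.1 (totallyReflexive_regular hxR hX)) hK⟩

/-- Reduction of an isomorphism. -/
lemma qequiv {A B : Type u} [AddCommGroup A] [Module R A] [AddCommGroup B]
    [Module R B] (e : A ≃ₗ[R] B) :
    Nonempty (QuotSMulTop x A ≃ₗ[R ⧸ Ideal.span {x}] QuotSMulTop x B) :=
  ⟨LinearEquiv.extendScalarsOfSurjective (R := R) Ideal.Quotient.mk_surjective
    (QuotSMulTop.congr x e)⟩

lemma isSyzygy_quot (hxR : IsSMulRegular R x) (n : ℕ) : ∀ (W K : ModuleCat.{u} R),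
    IsSMulRegular K x → IsSyzygy R n W K → IsSMulRegular W x ∧
    IsSyzygy (R ⧸ Ideal.span {x}) n (ModuleCat.of _ (QuotSMulTop x W))
      (ModuleCat.of _ (QuotSMulTop x K)) := by
  induction n with
  | zero =>
    rintro W K hK ⟨e⟩
    exact ⟨regular_of_injective e.toLinearMap e.injective hK, qequiv e⟩
  | succ n ih =>
    rintro W K hK ⟨V, F, f, g, hF, hF', hs, hV⟩
    obtain ⟨h1, h2⟩ := ih W V (regular_of_injective f hs.1 (regular_free hxR F)) hV
    exact ⟨h1, ModuleCat.of _ (QuotSMulTop x V), ModuleCat.of _ (QuotSMulTop x F), qmap x f,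
      qmap x g, inferInstanceAs (Module.Free (R ⧸ Ideal.span {x}) (QuotSMulTop x F)),
      finite_quot F, isShortExact_qmap hs hK, h2⟩

lemma pi_equiv (a : ℕ) (K : Type u) [AddCommGroup K] [Module R K] :
    Nonempty ((Fin a → QuotSMulTop x K) ≃ₗ[R ⧸ Ideal.span {x}] QuotSMulTop x (Fin a → K)) := by
  have h : x • (⊤ : Submodule R (Fin a → K)) =
      Submodule.pi Set.univ (fun _ => x • (⊤ : Submodule R K)) := by
    ext v
    rw [Submodule.mem_smul_pointwise_iff_exists, Submodule.mem_pi]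
    constructor
    · rintro ⟨w, -, rfl⟩ i -
      exact Submodule.smul_mem_pointwise_smul _ _ _ trivial
    · intro h
      choose w hw using fun i => (Submodule.mem_smul_pointwise_iff_exists _ _ _).1 (h i trivial)
      exact ⟨w, trivial, funext fun i => (hw i).2⟩
  exact ⟨(LinearEquiv.extendScalarsOfSurjective (R := R) Ideal.Quotient.mk_surjective
    ((Submodule.quotEquivOfEq _ _ h).trans (Submodule.quotientPi _))).symm⟩

lemma reducingStep_quot (hxR : IsSMulRegular R x) {K L : ModuleCat.{u} R} {a b n : ℕ}
    (hK : IsSMulRegular K x) (h : ReducingStep R K L a b n) : IsSMulRegular L x ∧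
    ReducingStep (R ⧸ Ideal.span {x}) (ModuleCat.of _ (QuotSMulTop x K))
      (ModuleCat.of _ (QuotSMulTop x L)) a b n := by
  obtain ⟨W, f, g, hW, hs⟩ := h
  obtain ⟨hWr, hW'⟩ := isSyzygy_quot hxR n W K hK hW
  have hb : IsSMulRegular (Fin b → W) x := fun v w h => funext fun i => hWr (congrFun h i)
  have ha : IsSMulRegular (Fin a → K) x := fun v w h => funext fun i => hK (congrFun h i)
  refine ⟨regular_mid hs ha hb, ?_⟩
  obtain ⟨e₁⟩ := pi_equiv (x := x) a K
  obtain ⟨e₂⟩ := pi_equiv (x := x) b W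
  obtain ⟨h1, h2, h3⟩ := isShortExact_qmap hs hb
  refine ⟨ModuleCat.of _ (QuotSMulTop x W), qmap x f ∘ₗ e₁.toLinearMap,
    e₂.symm.toLinearMap ∘ₗ qmap x g, hW', ?_, ?_, ?_⟩
  · exact h1.comp e₁.injective
  · exact e₂.symm.surjective.comp h2
  · intro y
    have : e₂.symm (qmap x g y) = 0 ↔ qmap x g y = 0 := by simp
    refine this.trans ((h3 y).trans ?_)
    constructor
    · rintro ⟨z, rfl⟩
      exact ⟨e₁.symm z, by simp⟩
    · rintro ⟨z, rfl⟩
      exact ⟨e₁ z, rfl⟩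

end Reduction2

theorem stmt9 (R : Type u) [CommRing R] [IsNoetherianRing R] [IsLocalRing R]
    (M : Type u) [AddCommGroup M] [Module R M] [Module.Finite R M]
    (x : R) (hx : x ∈ IsLocalRing.maximalIdeal R)
    (hxR : IsSMulRegular R x) (hxM : IsSMulRegular M x) :
    rGdim (R ⧸ Ideal.span {x})
        (ModuleCat.of (R ⧸ Ideal.span {x}) (M ⧸ (x • (⊤ : Submodule R M)))) ≤
      rGdim R (ModuleCat.of R M) := by
  unfold rGdim ReducingDim
  refine sInf_le_sInf ?_
  rintro _ ⟨r, rfl, K, a, b, n, hK0, hfin, hstep, m, hm⟩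
  have hreg : ∀ i, IsSMulRegular (K i) x := by
    intro i
    induction i using Fin.induction with
    | zero => rw [hK0]; exact hxM
    | succ i ih => exact (reducingStep_quot hxR ih (hstep i).2.2.2).1
  refine ⟨r, rfl, fun i => ModuleCat.of _ (QuotSMulTop x (K i)), a, b, n, ?_, ?_, ?_, m, ?_⟩
  · change ModuleCat.of _ (QuotSMulTop x (K 0)) = _
    rw [hK0]
  · intro i
    have := hfin i
    exact finite_quot (K i)
  · intro i
    obtain ⟨h1, h2, h3, h4⟩ := hstep i
    exact ⟨h1, h2, h3, (reducingStep_quot hxR (hreg _) h4).2⟩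
  · exact gdimLE_quot hxR m _ (hreg _) hm
end
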